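/- arXiv:2301.08879 — 9 statements merged into one kernel-verified Lean document; each statement's English description precedes it below -/
import Mathlib

section
/- Let n ≥ 1 be an integer, let A be the DFT matrix of size n, let u, v, x ∈ ℂ with Re(u+v) < 0, and let k be a natural number. Define the vector w ∈ ℂ^n whose j-th component (j ∈ {0,1,…,n−1}) is w_j = F_{(j/n,0,n)}(u,v,x) + (−1)^k F_{(−j/n,0,n)}(u,v,x) + (1/√n)·[ (−i)^k F_{(0,j/n,1)}(u/n², v/n², x/n) + (−i)^{3k} F_{(0,−j/n,1)}(u/n², v/n², x/n) ]. Then A w = i^k w, i.e. w satisfies the eigenvector equation of the DFT for the eigenvalue i^k. -/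
/-!
Put `g N = exp (u N(N+1)/(2n²) + v N(N-1)/(2n²) + 2πi N x/n)`, a Gaussian which is summable over `ℤ`
because `Re (u+v) < 0`. The two kinds of theta functions in `w` are its sum over a residue class and
its finite Fourier transform:
`F_{(j/n,0,n)}(u,v,x) = ∑_{N ≡ j mod n} g N = a j` and
`F_{(0,j/n,1)}(u/n²,v/n²,x/n) = ∑_N g N · exp (2πi jN/n) = b j`.
Splitting `ℤ` into residue classes gives `b = √n · A a` (`sum_dftKernel_mul_residueSum`), and
orthogonality of the additive characters mod `n` gives `(A b) j = √n · a (-j)`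
(`sum_dftKernel_mul_charSum`). Hence
`w = a + (-1)^k A² a + (-i)^k A a + (-i)^{3k} A³ a`, which is the (unnormalised) projection of `a` onto
the `i^k`-eigenspace of `A`, as `A⁴ = 1`.
-/

open Matrix

/-- The Ramanujan theta function with characteristics `(α, β, c)`, written with
exponential parameters `a = e^u`, `b = e^v` (so `|ab| < 1` means `Re (u+v) < 0`):
`F_{(α,β,c)}(u,v,x) = ∑_{m∈ℤ} exp(u(m+α)(m+α+1/c)/2 + v(m+α)(m+α−1/c)/2 + 2πi(m+α)(x+β))`. -/
noncomputable def ramanujanTheta (α β c : ℝ) (u v x : ℂ) : ℂ :=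
  ∑' m : ℤ, Complex.exp (u * (((m : ℂ) + α) * ((m : ℂ) + α + 1 / (c : ℂ))) / 2
    + v * (((m : ℂ) + α) * ((m : ℂ) + α - 1 / (c : ℂ))) / 2
    + 2 * Real.pi * Complex.I * ((m : ℂ) + α) * (x + β))

/-- The DFT matrix of size `n`: entries `A j k = (1/√n) · exp(2πi jk/n)`. -/
noncomputable def dftMatrix (n : ℕ) : Matrix (Fin n) (Fin n) ℂ :=
  fun j k => (1 / (Real.sqrt n : ℂ)) * Complex.exp (2 * Real.pi * Complex.I * j * k / n)

/-- The `n`-th roots of unity `exp (2πi M/n)`, indexed by integers `M`. -/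
noncomputable def dftKernel (n : ℕ) (M : ℤ) : ℂ :=
  Complex.exp (2 * Real.pi * Complex.I * M / n)

/-- The sum of `g` over the residue class of `j` modulo `n`. -/
noncomputable def residueSum (n : ℕ) (g : ℤ → ℂ) (j : ℤ) : ℂ := ∑' m : ℤ, g (m * n + j)

/-- The sum of `g` twisted by the additive character `N ↦ exp (2πi jN/n)`. -/
noncomputable def charSum (n : ℕ) (g : ℤ → ℂ) (j : ℤ) : ℂ := ∑' N : ℤ, g N * dftKernel n (j * N)

lemma dftKernel_add (n : ℕ) (M N : ℤ) : dftKernel n (M + N) = dftKernel n M * dftKernel n N := by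
  rw [dftKernel, dftKernel, dftKernel, ← Complex.exp_add]
  push_cast
  ring_nf

lemma dftKernel_mul_self {n : ℕ} (hn : n ≠ 0) (M : ℤ) : dftKernel n (M * n) = 1 := by
  rw [dftKernel, Complex.exp_eq_one_iff]
  refine ⟨M, ?_⟩
  have : (n : ℂ) ≠ 0 := by exact_mod_cast hn
  push_cast
  field_simp

lemma norm_dftKernel (n : ℕ) (M : ℤ) : ‖dftKernel n M‖ = 1 := by
  have : 2 * Real.pi * Complex.I * M / n = ((2 * Real.pi * M / n : ℝ) : ℂ) * Complex.I := by
    push_cast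
    ring
  rw [dftKernel, this, Complex.norm_exp_ofReal_mul_I]

lemma dftKernel_mul_natCast (n : ℕ) (M : ℤ) (k : ℕ) :
    dftKernel n (M * k) = dftKernel n M ^ k := by
  rw [dftKernel, dftKernel, ← Complex.exp_nat_mul]
  push_cast
  ring_nf

lemma dftKernel_eq_one_iff {n : ℕ} (hn : n ≠ 0) (M : ℤ) : dftKernel n M = 1 ↔ (n : ℤ) ∣ M := by
  constructor
  · intro h
    rw [dftKernel, Complex.exp_eq_one_iff] at h
    obtain ⟨m, hm⟩ := h
    refine ⟨m, ?_⟩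
    have h1 : (n : ℂ) ≠ 0 := by exact_mod_cast hn
    have h2 := Complex.two_pi_I_ne_zero
    have h3 : (2 * Real.pi * Complex.I) * (M : ℂ) = (2 * Real.pi * Complex.I) * (n * m : ℂ) := by
      rw [div_eq_iff h1] at hm
      rw [hm]
      ring
    exact_mod_cast mul_left_cancel₀ h2 h3
  · rintro ⟨m, rfl⟩
    rw [mul_comm]
    exact dftKernel_mul_self hn m

/-- Orthogonality of the additive characters modulo `n`. -/
lemma sum_dftKernel {n : ℕ} (hn : n ≠ 0) (M : ℤ) :
    ∑ k : Fin n, dftKernel n (M * (k : ℕ)) = if (n : ℤ) ∣ M then (n : ℂ) else 0 := by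
  simp only [dftKernel_mul_natCast]
  rw [Fin.sum_univ_eq_sum_range (fun k => dftKernel n M ^ k) n]
  split_ifs with h
  · rw [(dftKernel_eq_one_iff hn M).2 h]
    simp
  · have h1 : dftKernel n M ≠ 1 := fun h' => h ((dftKernel_eq_one_iff hn M).1 h')
    have h2 : dftKernel n M ^ n = 1 := by
      rw [← dftKernel_mul_natCast, dftKernel_mul_self hn]
    rw [geom_sum_eq h1, h2]
    simp

lemma summable_mul_dftKernel {g : ℤ → ℂ} (hg : Summable g) (n : ℕ) (j : ℤ) :
    Summable fun N : ℤ => g N * dftKernel n (j * N) := by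
  refine Summable.of_norm ?_
  simpa only [norm_mul, norm_dftKernel, mul_one] using hg.norm

/-- Splitting `ℤ` into residue classes modulo `n`: the transform of the residue sums of `g` is the
twisted sum of `g`. -/
lemma sum_dftKernel_mul_residueSum {n : ℕ} (hn : n ≠ 0) {g : ℤ → ℂ} (hg : Summable g) (j : ℤ) :
    ∑ k : Fin n, dftKernel n (j * (k : ℕ)) * residueSum n g (k : ℕ) = charSum n g j := by
  have : NeZero n := ⟨hn⟩
  have hs := (summable_mul_dftKernel hg n j)
  have key := ((Equiv.prodComm _ _).trans (Int.divModEquiv n).symm).tsum_eq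
    (fun N : ℤ => g N * dftKernel n (j * N))
  have hs' := ((Equiv.prodComm _ _).trans (Int.divModEquiv n).symm).summable_iff.2 hs
  rw [charSum, ← key]
  refine Eq.trans ?_ (hs'.tsum_prod).symm
  rw [tsum_fintype]
  refine Finset.sum_congr rfl fun k _ => ?_
  rw [residueSum, ← tsum_mul_left]
  refine tsum_congr fun m => ?_
  have h : dftKernel n (j * (m * n + (k : ℕ))) = dftKernel n (j * (k : ℕ)) := by
    rw [mul_add, dftKernel_add, ← mul_assoc, dftKernel_mul_self hn, one_mul]
  simp [Int.divModEquiv, h, mul_comm]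

/-- Fourier inversion modulo `n`: the transform of the twisted sums of `g` recovers its residue sums,
reflected and multiplied by `n`. -/
lemma sum_dftKernel_mul_charSum {n : ℕ} (hn : n ≠ 0) {g : ℤ → ℂ} (hg : Summable g) (j : ℤ) :
    ∑ k : Fin n, dftKernel n (j * (k : ℕ)) * charSum n g (k : ℕ) = n * residueSum n g (-j) := by
  simp only [charSum, ← tsum_mul_left]
  rw [← Summable.tsum_finsetSum fun k _ => (summable_mul_dftKernel hg n _).mul_left _]
  have h1 : ∀ N : ℤ, ∑ k : Fin n, dftKernel n (j * (k : ℕ)) * (g N * dftKernel n ((k : ℕ) * N))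
      = g N * if (n : ℤ) ∣ j + N then (n : ℂ) else 0 := by
    intro N
    rw [← sum_dftKernel hn, Finset.mul_sum]
    refine Finset.sum_congr rfl fun k _ => ?_
    rw [add_mul, dftKernel_add, mul_comm N]
    ring
  simp only [h1]
  have hinj : Function.Injective fun m : ℤ => m * (n : ℤ) + -j := by
    intro a b h
    have hn' : (n : ℤ) ≠ 0 := by exact_mod_cast hn
    exact mul_right_cancel₀ hn' (add_right_cancel h)
  rw [residueSum, ← tsum_mul_left, ← hinj.tsum_eq]
  · refine tsum_congr fun m => ?_
    simp [mul_comm]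
  · intro N hN
    by_contra h
    refine hN ?_
    beta_reduce
    rw [if_neg, mul_zero]
    rintro ⟨m, hm⟩
    refine h ⟨m, ?_⟩
    simp only
    linarith

lemma residueSum_comp_neg (n : ℕ) (g : ℤ → ℂ) (j : ℤ) :
    residueSum n (fun N => g (-N)) j = residueSum n g (-j) := by
  rw [residueSum, residueSum, ← (Equiv.neg ℤ).tsum_eq]
  refine tsum_congr fun m => ?_
  simp only [Equiv.neg_apply]
  ring_nf

lemma charSum_comp_neg (n : ℕ) (g : ℤ → ℂ) (j : ℤ) :
    charSum n (fun N => g (-N)) j = charSum n g (-j) := by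
  rw [charSum, charSum, ← (Equiv.neg ℤ).tsum_eq]
  refine tsum_congr fun m => ?_
  simp only [Equiv.neg_apply]
  ring_nf

/-- The general term of `ramanujanTheta 0 0 1 (u / n ^ 2) (v / n ^ 2) (x / n)`. -/
noncomputable def thetaTerm (n : ℕ) (u v x : ℂ) (N : ℤ) : ℂ :=
  Complex.exp (u * (N * (N + 1)) / (2 * n ^ 2) + v * (N * (N - 1)) / (2 * n ^ 2)
    + 2 * Real.pi * Complex.I * N * x / n)

/-- The terms are those of a Jacobi theta function with `τ = (u+v)/(2πi n²)`, and `Im τ > 0`. -/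
lemma summable_thetaTerm {n : ℕ} (hn : n ≠ 0) {u v : ℂ} (x : ℂ) (huv : (u + v).re < 0) :
    Summable (thetaTerm n u v x) := by
  have hn' : (n : ℂ) ≠ 0 := by exact_mod_cast hn
  have hpi : (Real.pi : ℂ) ≠ 0 := by exact_mod_cast Real.pi_ne_zero
  have hI := Complex.I_ne_zero
  have hτ : 0 < (((1 / (2 * Real.pi * n ^ 2) : ℝ) : ℂ) * (-Complex.I * (u + v))).im := by
    rw [Complex.im_ofReal_mul]
    have : 0 < (n : ℝ) := by positivity
    refine mul_pos (by positivity) ?_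
    simp at huv ⊢
    linarith
  have h := (summable_jacobiTheta₂_term_iff
    (x / n + (u - v) / (2 * n ^ 2) / (2 * Real.pi * Complex.I)) _).2 hτ
  refine h.congr fun N => ?_
  rw [jacobiTheta₂_term, thetaTerm]
  congr 1
  push_cast
  field_simp
  rw [Complex.I_sq]
  ring

lemma ramanujanTheta_eq_residueSum {n : ℕ} (hn : n ≠ 0) (u v x : ℂ) (j : ℤ) :
    ramanujanTheta ((j : ℝ) / n) 0 n u v x = residueSum n (thetaTerm n u v x) j := by
  have hn' : (n : ℂ) ≠ 0 := by exact_mod_cast hn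
  refine tsum_congr fun m => ?_
  rw [thetaTerm]
  congr 1
  push_cast
  field_simp
  ring

lemma ramanujanTheta_eq_charSum {n : ℕ} (hn : n ≠ 0) (u v x : ℂ) (j : ℤ) :
    ramanujanTheta 0 ((j : ℝ) / n) 1 (u / n ^ 2) (v / n ^ 2) (x / n)
      = charSum n (thetaTerm n u v x) j := by
  have hn' : (n : ℂ) ≠ 0 := by exact_mod_cast hn
  refine tsum_congr fun m => ?_
  rw [thetaTerm, dftKernel, ← Complex.exp_add]
  congr 1
  push_cast
  field_simp
  ring

theorem dft_eigenvector_ramanujanTheta (n : ℕ) (hn : 1 ≤ n) (u v x : ℂ)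
    (huv : (u + v).re < 0) (k : ℕ) (w : Fin n → ℂ)
    (hw : ∀ j : Fin n, w j =
      ramanujanTheta ((j : ℝ) / n) 0 n u v x
      + (-1 : ℂ) ^ k * ramanujanTheta (-((j : ℝ) / n)) 0 n u v x
      + (1 / (Real.sqrt n : ℂ)) *
        ((-Complex.I) ^ k *
            ramanujanTheta 0 ((j : ℝ) / n) 1 (u / n ^ 2) (v / n ^ 2) (x / n)
          + (-Complex.I) ^ (3 * k) *
            ramanujanTheta 0 (-((j : ℝ) / n)) 1 (u / n ^ 2) (v / n ^ 2) (x / n))) :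
    dftMatrix n *ᵥ w = Complex.I ^ k • w := by
  have hn0 : n ≠ 0 := by omega
  set g := thetaTerm n u v x with hgdef
  have hg : Summable g := summable_thetaTerm hn0 x huv
  have hg' : Summable fun N => g (-N) := (Equiv.neg ℤ).summable_iff.2 hg
  set s : ℂ := (Real.sqrt n : ℂ) with hs
  have hss : s * s = n := by
    rw [hs, ← Complex.ofReal_mul, Real.mul_self_sqrt (Nat.cast_nonneg n)]
    simp
  have hs0 : s ≠ 0 := by
    rintro h
    rw [h, zero_mul] at hss
    exact hn0 (by exact_mod_cast hss.symm)
  have hw' : ∀ j : Fin n, w j = residueSum n g (j : ℕ) + (-1 : ℂ) ^ k * residueSum n g (-(j : ℕ))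
      + (1 / s) * ((-Complex.I) ^ k * charSum n g (j : ℕ)
        + (-Complex.I) ^ (3 * k) * charSum n g (-(j : ℕ))) := by
    intro j
    rw [hw, ← ramanujanTheta_eq_residueSum hn0, ← ramanujanTheta_eq_residueSum hn0,
      ← ramanujanTheta_eq_charSum hn0, ← ramanujanTheta_eq_charSum hn0]
    push_cast
    simp only [neg_div]
  ext j
  have e1 := sum_dftKernel_mul_residueSum hn0 hg (j : ℕ)
  have e2 := sum_dftKernel_mul_residueSum hn0 hg' (j : ℕ)
  have e3 := sum_dftKernel_mul_charSum hn0 hg (j : ℕ)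
  have e4 := sum_dftKernel_mul_charSum hn0 hg' (j : ℕ)
  simp only [residueSum_comp_neg, charSum_comp_neg, neg_neg] at e2 e4
  have hA : ∀ l : Fin n, dftMatrix n j l = (1 / s) * dftKernel n ((j : ℕ) * (l : ℕ)) := by
    intro l
    rw [dftMatrix, dftKernel, ← hs]
    push_cast
    ring_nf
  have hsum : (dftMatrix n *ᵥ w) j = (1 / s) * (charSum n g (j : ℕ)
      + (-1 : ℂ) ^ k * charSum n g (-(j : ℕ))
      + (1 / s) * ((-Complex.I) ^ k * (n * residueSum n g (-(j : ℕ)))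
        + (-Complex.I) ^ (3 * k) * (n * residueSum n g (j : ℕ)))) := by
    rw [← e1, ← e2, ← e3, ← e4]
    simp only [Matrix.mulVec, dotProduct, hA, hw', Finset.mul_sum, ← Finset.sum_add_distrib]
    refine Finset.sum_congr rfl fun l _ => ?_
    ring
  have p1 : (-Complex.I) ^ k = Complex.I ^ k * (-1) ^ k := by
    rw [← mul_pow, mul_neg_one]
  have p2 : (-Complex.I) ^ (3 * k) = Complex.I ^ k := by
    rw [pow_mul]
    congr 1
    rw [Odd.neg_pow (by decide), Complex.I_pow_three, neg_neg]
  have p3 : Complex.I ^ k * Complex.I ^ k = (-1) ^ k := by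
    rw [← mul_pow, Complex.I_mul_I]
  have p4 : ((-1 : ℂ)) ^ k * (-1) ^ k = 1 := by
    rw [← mul_pow]
    simp
  rw [hsum, Pi.smul_apply, smul_eq_mul, hw', p1, p2, ← hss]
  field_simp
  -- The coefficients of the four theta values match by `p3` and `p4`.
  generalize residueSum n g (j : ℕ) = a, residueSum n g (-(j : ℕ)) = a',
    charSum n g (j : ℕ) = b, charSum n g (-(j : ℕ)) = b'
  generalize Complex.I ^ k = t at *
  generalize (-1 : ℂ) ^ k = r at *
  linear_combination (-b' - r * b) * p3 - b * p4
end

section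
/- For all u, v, x ∈ ℂ with Re(u+v) < 0, the following identity holds: 2·F_{(0,0,2)}(u,v,x) + F_{(1/2,0,2)}(u,v,x) + F_{(−1/2,0,2)}(u,v,x) = 2·F_{(0,0,1)}(u/4, v/4, x/2). -/
/-- Splitting a summable series over `ℤ` into its even and odd parts. -/
lemma tsum_int_even_add_odd (f : ℤ → ℂ) (hf : Summable f) :
    ∑' m : ℤ, f (2 * m) + ∑' m : ℤ, f (2 * m + 1) = ∑' n, f n := by
  have he : Function.Injective (fun m : ℤ => 2 * m) := fun a b h => by
    simp only at h; omega
  have ho : Function.Injective (fun m : ℤ => 2 * m + 1) := fun a b h => by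
    simp only at h; omega
  have hc : IsCompl (Set.range fun m : ℤ => 2 * m) (Set.range fun m : ℤ => 2 * m + 1) := by
    simpa only [range_two_mul, range_two_mul_add_one] using Int.isCompl_even_odd
  exact ((he.hasSum_range_iff.2 (hf.comp_injective he).hasSum).add_isCompl hc
    (ho.hasSum_range_iff.2 (hf.comp_injective ho).hasSum)).tsum_eq.symm

theorem ramanujanTheta_size_two_first (u v x : ℂ) (huv : (u + v).re < 0) :
    2 * ramanujanTheta 0 0 2 u v x
      + ramanujanTheta (1/2) 0 2 u v x + ramanujanTheta (-(1/2)) 0 2 u v x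
    = 2 * ramanujanTheta 0 0 1 (u/4) (v/4) (x/2) := by
  set t : ℤ → ℂ := fun n => Complex.exp (u * ((n : ℂ) * (n + 1)) / 8
    + v * ((n : ℂ) * (n - 1)) / 8 + Real.pi * Complex.I * n * x) with ht
  have hpi : (Real.pi : ℂ) ≠ 0 := by exact_mod_cast Real.pi_ne_zero
  have hI := Complex.I_ne_zero
  have hsum : Summable t := by
    have hτ : 0 < (-((u + v) * Complex.I) / ((8 * Real.pi : ℝ) : ℂ)).im := by
      rw [Complex.div_ofReal_im, Complex.neg_im, Complex.mul_I_im]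
      exact div_pos (by linarith) (by positivity)
    have hJ := (summable_jacobiTheta₂_term_iff
      (x / 2 - (u - v) * Complex.I / (16 * Real.pi)) _).2 hτ
    refine hJ.congr fun n => ?_
    simp only [ht, jacobiTheta₂_term]
    congr 1
    push_cast
    field_simp
    linear_combination (-16 * (n : ℂ) * ((u - v) + n * (u + v))) * Complex.I_sq
  have hR : ramanujanTheta 0 0 1 (u/4) (v/4) (x/2) = ∑' n, t n :=
    tsum_congr fun n => by
      simp only [ht]; congr 1; push_cast; ring
  have hE : ramanujanTheta 0 0 2 u v x = ∑' m : ℤ, t (2 * m) :=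
    tsum_congr fun m => by
      simp only [ht]; congr 1; push_cast; ring
  have hO : ramanujanTheta (1/2) 0 2 u v x = ∑' m : ℤ, t (2 * m + 1) :=
    tsum_congr fun m => by
      simp only [ht]; congr 1; push_cast; ring
  have hO' : ramanujanTheta (-(1/2)) 0 2 u v x = ∑' m : ℤ, t (2 * m + 1) := by
    -- reindex `m ↦ m - 1`, turning `2m + 1` into `2m - 1 = 2(m - 1/2)`
    rw [← (Equiv.subRight (1 : ℤ)).tsum_eq]
    exact tsum_congr fun m => by
      simp only [ht, Equiv.subRight_apply]; congr 1; push_cast; ring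
  rw [hR, hE, hO, hO', ← tsum_int_even_add_odd t hsum]
  ring
end

section
/- For all u, v, x ∈ ℂ with Re(u+v) < 0, the following identity holds: 4·F_{(0,0,2)}(u,v,x) = 2·F_{(0,0,1)}(u/4, v/4, x/2) + F_{(0,1/2,1)}(u/4, v/4, x/2) + F_{(0,−1/2,1)}(u/4, v/4, x/2). -/
open Complex in
/-- Each term is the Jacobi theta term with `π i τ = (u + v) / 8` and `2 π i z = (u - v) / 8 + π i x`;
the hypothesis `Re (u + v) < 0` says exactly that `τ` lies in the upper half-plane. -/
lemma summable_ramanujanTheta_term (u v x : ℂ) (huv : (u + v).re < 0) :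
    Summable fun m : ℤ => cexp (((u + v) * m ^ 2 + (u - v) * m) / 8 + Real.pi * I * m * x) := by
  have hpi : (Real.pi : ℂ) ≠ 0 := by exact_mod_cast Real.pi_ne_zero
  have hτ : 0 < (-((u + v) * I) / ((8 * Real.pi : ℝ) : ℂ)).im := by
    rw [div_ofReal_im, neg_im, mul_I_im]
    exact div_pos (by linarith) (by positivity)
  refine ((summable_jacobiTheta₂_term_iff
    (-((u - v) * I) / (16 * Real.pi) + x / 2) _).mpr hτ).congr fun m => ?_
  rw [jacobiTheta₂_term]
  congr 1
  push_cast
  field_simp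
  linear_combination 16 * (-(u + v) * m ^ 2 - (u - v) * m) * I_sq

open Complex in
lemma cexp_pi_mul_I_mul_int (m : ℤ) : cexp (Real.pi * I * m) = (-1) ^ m := by
  rw [mul_comm, exp_int_mul, exp_pi_mul_I]

open Complex in
theorem ramanujanTheta_corollary_first (u v x : ℂ) (huv : (u + v).re < 0) :
    4 * ramanujanTheta 0 0 2 u v x
    = 2 * ramanujanTheta 0 0 1 (u/4) (v/4) (x/2)
      + ramanujanTheta 0 (1/2) 1 (u/4) (v/4) (x/2)
      + ramanujanTheta 0 (-(1/2)) 1 (u/4) (v/4) (x/2) := by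
  set g : ℤ → ℂ := fun m =>
    cexp (((u + v) * m ^ 2 + (u - v) * m) / 8 + Real.pi * I * m * x) with hg
  have hs : Summable g := summable_ramanujanTheta_term u v x huv
  have hbound : Summable fun m : ℤ => (-1 : ℂ) ^ m * g m := by
    refine Summable.of_norm_bounded hs.norm fun m => ?_
    simp
  have h0 : ramanujanTheta 0 0 1 (u/4) (v/4) (x/2) = ∑' m : ℤ, g m := by
    refine tsum_congr fun m => ?_
    rw [hg]
    congr 1
    push_cast
    ring
  have h1 : ramanujanTheta 0 (1/2) 1 (u/4) (v/4) (x/2) = ∑' m : ℤ, (-1) ^ m * g m := by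
    refine tsum_congr fun m => ?_
    rw [← cexp_pi_mul_I_mul_int, ← exp_add]
    congr 1
    push_cast
    ring
  have h2 : ramanujanTheta 0 (-(1/2)) 1 (u/4) (v/4) (x/2) = ∑' m : ℤ, (-1) ^ m * g m := by
    refine tsum_congr fun m => ?_
    -- `(-1)^m` is its own inverse, so the shift by `-1/2` has the same effect as that by `1/2`.
    have hm : (-1 : ℂ) ^ m = cexp (-(Real.pi * I * m)) := by
      rw [exp_neg, cexp_pi_mul_I_mul_int, ← inv_zpow, inv_neg_one]
    rw [hm, ← exp_add]
    congr 1
    push_cast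
    ring
  have h3 : ramanujanTheta 0 0 2 u v x = ∑' k : ℤ, g (2 * k) := by
    refine tsum_congr fun k => ?_
    rw [hg]
    congr 1
    push_cast
    ring
  have hinj : Function.Injective fun k : ℤ => 2 * k := fun a b h => by
    simpa using h
  have hsupp : (Function.support fun m : ℤ => (2 + 2 * (-1 : ℂ) ^ m) * g m)
      ⊆ Set.range fun k : ℤ => 2 * k := by
    intro m hm
    rcases Int.even_or_odd m with he | ho
    · obtain ⟨k, rfl⟩ := he.two_dvd
      exact ⟨k, rfl⟩
    · exact absurd (by simp [ho.neg_one_zpow]) hm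
  have heven : ∑' k : ℤ, 4 * g (2 * k) = ∑' m : ℤ, (2 + 2 * (-1 : ℂ) ^ m) * g m := by
    rw [← hinj.tsum_eq hsupp]
    refine tsum_congr fun k => ?_
    rw [(even_two_mul k).neg_one_zpow]
    norm_num
  rw [h0, h1, h2, h3, ← tsum_mul_left, heven, ← tsum_mul_left,
    ← (hs.mul_left 2).tsum_add hbound, ← ((hs.mul_left 2).add hbound).tsum_add hbound]
  exact tsum_congr fun m => by ring
end

section
/- For all u, v, x ∈ ℂ with Re(u+v) < 0, the following quadratic identity holds: 4·F_{(0,0,2)}(u,v,x)² − [ F_{(1/2,0,2)}(u,v,x) + F_{(−1/2,0,2)}(u,v,x) ]² = 2·F_{(0,0,1)}(u/4, v/4, x/2)·[ F_{(0,1/2,1)}(u/4, v/4, x/2) + F_{(0,−1/2,1)}(u/4, v/4, x/2) ]. -/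
/-- The Gaussian term `exp ((u + v) (n/2)² / 2 + (u - v) (n/2) / 4 + 2πi (n/2) x)` of the theta
series, indexed by twice its half-integer argument. -/
noncomputable def thetaHalfTerm (u v x : ℂ) (n : ℤ) : ℂ :=
  Complex.exp ((u + v) * (n : ℂ) ^ 2 / 8 + (u - v) * n / 8 + Real.pi * Complex.I * n * x)

lemma summable_thetaHalfTerm (u v x : ℂ) (huv : (u + v).re < 0) :
    Summable (thetaHalfTerm u v x) := by
  have hpi : (Real.pi : ℂ) ≠ 0 := by exact_mod_cast Real.pi_ne_zero
  have hτ : 0 < (-Complex.I * (u + v) / ((8 * Real.pi : ℝ) : ℂ)).im := by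
    rw [Complex.div_ofReal_im]
    apply div_pos _ (by positivity)
    simpa [Complex.mul_im, add_comm] using neg_pos.2 huv
  have h := (summable_jacobiTheta₂_term_iff
    (-Complex.I * (u - v) / (16 * Real.pi) + x / 2) _).2 hτ
  refine h.congr fun n => ?_
  unfold thetaHalfTerm jacobiTheta₂_term
  congr 1
  push_cast
  field_simp
  linear_combination (-16 * (u - v) * (n : ℂ) - 16 * (u + v) * (n : ℂ) ^ 2) * Complex.I_sq

lemma ramanujanTheta_zero_zero_two (u v x : ℂ) :
    ramanujanTheta 0 0 2 u v x = ∑' m : ℤ, thetaHalfTerm u v x (2 * m) := by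
  refine tsum_congr fun m => congrArg _ ?_
  push_cast
  ring

lemma ramanujanTheta_half_zero_two (u v x : ℂ) :
    ramanujanTheta (1/2) 0 2 u v x = ∑' m : ℤ, thetaHalfTerm u v x (2 * m + 1) := by
  refine tsum_congr fun m => congrArg _ ?_
  push_cast
  ring

lemma ramanujanTheta_neg_half_zero_two (u v x : ℂ) :
    ramanujanTheta (-(1/2)) 0 2 u v x = ∑' m : ℤ, thetaHalfTerm u v x (2 * m + 1) := by
  rw [← (Equiv.subRight (1 : ℤ)).tsum_eq fun m => thetaHalfTerm u v x (2 * m + 1)]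
  refine tsum_congr fun m => congrArg _ ?_
  simp only [Equiv.subRight_apply]
  push_cast
  ring

/-- At the rescaled arguments, the characteristic `β` twists the half-integer terms by
`e^{2πinβ}`. -/
lemma ramanujanTheta_zero_one (β : ℝ) (u v x : ℂ) :
    ramanujanTheta 0 β 1 (u/4) (v/4) (x/2) =
      ∑' n : ℤ, Complex.exp (n * (2 * Real.pi * Complex.I * β)) * thetaHalfTerm u v x n := by
  refine tsum_congr fun n => ?_
  rw [thetaHalfTerm, ← Complex.exp_add]
  congr 1
  push_cast
  ring

lemma hasSum_int_even_add_odd {f : ℤ → ℂ} {a b : ℂ} (he : HasSum (fun m : ℤ => f (2 * m)) a)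
    (ho : HasSum (fun m : ℤ => f (2 * m + 1)) b) : HasSum f (a + b) := by
  have i0 : Function.Injective fun m : ℤ => 2 * m := fun a b h => by simpa using h
  have i1 : Function.Injective fun m : ℤ => 2 * m + 1 := fun a b h => by simpa using h
  refine (i0.hasSum_range_iff.2 he).add_isCompl ?_ (i1.hasSum_range_iff.2 ho)
  rw [← compl_eq_iff_isCompl]
  ext n
  simp only [Set.mem_compl_iff, Set.mem_range, not_exists]
  constructor
  · intro h
    exact ⟨n / 2, by have := h (n / 2); lia⟩
  · rintro ⟨m, rfl⟩ k
    lia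

/-- Even/odd splitting for a twist whose value `ε = e^{2πiβ}` at `n = 1` satisfies `ε² = 1`. -/
lemma ramanujanTheta_zero_one_split (β : ℝ) (ε u v x : ℂ) (huv : (u + v).re < 0)
    (hε : Complex.exp (2 * Real.pi * Complex.I * β) = ε) (hε2 : ε ^ 2 = 1) :
    ramanujanTheta 0 β 1 (u/4) (v/4) (x/2) =
      ∑' m : ℤ, thetaHalfTerm u v x (2 * m) + ε * ∑' m : ℤ, thetaHalfTerm u v x (2 * m + 1) := by
  have hs := summable_thetaHalfTerm u v x huv
  have h0 : Summable fun m : ℤ => thetaHalfTerm u v x (2 * m) :=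
    hs.comp_injective fun a b h => by simpa using h
  have h1 : Summable fun m : ℤ => thetaHalfTerm u v x (2 * m + 1) :=
    hs.comp_injective fun a b h => by simpa using h
  have hne : ε ≠ 0 := hε ▸ Complex.exp_ne_zero _
  have heven (m : ℤ) : ε ^ (2 * m) = 1 := by
    rw [zpow_mul]
    norm_cast
    rw [hε2, one_zpow]
  rw [ramanujanTheta_zero_one]
  simp only [Complex.exp_int_mul, hε]
  refine (hasSum_int_even_add_odd ?_ ?_).tsum_eq
  · simpa only [heven, one_mul] using h0.hasSum
  · simpa only [zpow_add₀ hne, heven, one_mul, zpow_one] using h1.hasSum.mul_left ε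

theorem ramanujanTheta_quadratic_identity (u v x : ℂ) (huv : (u + v).re < 0) :
    4 * ramanujanTheta 0 0 2 u v x ^ 2
      - (ramanujanTheta (1/2) 0 2 u v x + ramanujanTheta (-(1/2)) 0 2 u v x) ^ 2
    = 2 * ramanujanTheta 0 0 1 (u/4) (v/4) (x/2) *
        (ramanujanTheta 0 (1/2) 1 (u/4) (v/4) (x/2)
          + ramanujanTheta 0 (-(1/2)) 1 (u/4) (v/4) (x/2)) := by
  have e1 : Complex.exp (2 * Real.pi * Complex.I * ((1/2 : ℝ) : ℂ)) = -1 := by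
    rw [← Complex.exp_pi_mul_I]
    congr 1
    push_cast
    ring
  have e2 : Complex.exp (2 * Real.pi * Complex.I * ((-(1/2) : ℝ) : ℂ)) = -1 := by
    rw [Complex.ofReal_neg, mul_neg, Complex.exp_neg, e1]
    norm_num
  rw [ramanujanTheta_zero_zero_two, ramanujanTheta_half_zero_two, ramanujanTheta_neg_half_zero_two,
    ramanujanTheta_zero_one_split 0 1 u v x huv (by simp) (by norm_num),
    ramanujanTheta_zero_one_split (1/2) (-1) u v x huv e1 (by norm_num),
    ramanujanTheta_zero_one_split (-(1/2)) (-1) u v x huv e2 (by norm_num)]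
  ring
end

section
/- Let τ ∈ ℂ with Im τ > 0, and let w, x ∈ ℂ be arbitrary. Then 2·θ((w−τ)/4 + x, τ) − 2·θ((w−τ)/8 + (x+1)/2, τ/4) = e^{πi(w/4 + x)}·θ((w+τ)/4 + x, τ) + e^{πi((2τ−w)/4 − x)}·θ((w−3τ)/4 + x, τ). -/
/-!
Put `z = (w - τ) / 4 + x`, so that `(w - τ) / 8 + (x + 1) / 2 = (z + 1) / 2`. Splitting the series
of `θ((z + 1) / 2, τ / 4)` by the parity of the index gives
`θ(z, τ) - exp(πi(τ/4 + z)) θ(z + τ/2, τ)` (`jacobiTheta₂_half_add_half`), so the left side of the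
identity is twice `exp(πi(w/4 + x)) θ((w + τ)/4 + x, τ)`. Each of the two terms on the right equals
that product: the first literally, the second by the quasi-periodicity of `θ` under `z ↦ z + τ`.
-/

/-- The Jacobi theta function `θ(z,τ) = ∑_{m∈ℤ} exp(πiτm² + 2πimz)`. -/
noncomputable def jTheta (z τ : ℂ) : ℂ :=
  ∑' m : ℤ, Complex.exp (Real.pi * Complex.I * τ * (m : ℂ) ^ 2
    + 2 * Real.pi * Complex.I * (m : ℂ) * z)

lemma jTheta_eq_jacobiTheta₂ (z τ : ℂ) : jTheta z τ = jacobiTheta₂ z τ := by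
  unfold jTheta jacobiTheta₂ jacobiTheta₂_term
  refine tsum_congr fun m => ?_
  congr 1
  ring

/-- The even-indexed terms of the left side form `θ(z, τ)`; the odd-indexed ones, after completing
the square and using `exp(πi(2m + 1)) = -1`, form a multiple of `θ(z + τ/2, τ)`. -/
lemma jacobiTheta₂_half_add_half (z τ : ℂ) (hτ : 0 < τ.im) :
    jacobiTheta₂ ((z + 1) / 2) (τ / 4) = jacobiTheta₂ z τ
      - Complex.exp (Real.pi * Complex.I * (τ / 4 + z)) * jacobiTheta₂ (z + τ / 2) τ := by
  have heven : HasSum ((jacobiTheta₂_term · ((z + 1) / 2) (τ / 4)) ∘ fun m : ℤ => 2 * m)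
      (jacobiTheta₂ z τ) := by
    refine (hasSum_jacobiTheta₂_term z hτ).congr_fun fun m => ?_
    rw [Function.comp_apply, jacobiTheta₂_term, jacobiTheta₂_term,
      Complex.exp_eq_exp_iff_exists_int]
    -- The exponents differ by `2πim`.
    refine ⟨m, ?_⟩
    push_cast
    ring
  have hodd : HasSum ((jacobiTheta₂_term · ((z + 1) / 2) (τ / 4)) ∘ fun m : ℤ => 2 * m + 1)
      (-Complex.exp (Real.pi * Complex.I * (τ / 4 + z)) * jacobiTheta₂ (z + τ / 2) τ) := by
    refine ((hasSum_jacobiTheta₂_term (z + τ / 2) hτ).mul_left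
      (-Complex.exp (Real.pi * Complex.I * (τ / 4 + z)))).congr_fun fun m => ?_
    -- With the sign absorbed as `exp(πi)`, the exponents again differ by `2πim`.
    rw [Function.comp_apply, jacobiTheta₂_term, jacobiTheta₂_term, neg_mul, ← neg_one_mul,
      ← Complex.exp_pi_mul_I, ← Complex.exp_add, ← Complex.exp_add,
      Complex.exp_eq_exp_iff_exists_int]
    refine ⟨m, ?_⟩
    push_cast
    ring
  have hinj : Function.Injective fun m : ℤ => 2 * m := fun a b h => by
    simpa using h
  have hinj' : Function.Injective fun m : ℤ => 2 * m + 1 := fun a b h => by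
    simpa using h
  have hcompl : IsCompl (Set.range fun m : ℤ => 2 * m) (Set.range fun m : ℤ => 2 * m + 1) := by
    simpa using Int.isCompl_even_odd
  rw [jacobiTheta₂, sub_eq_add_neg, ← neg_mul]
  exact (HasSum.add_isCompl (f := (jacobiTheta₂_term · ((z + 1) / 2) (τ / 4))) hcompl
    (hinj.hasSum_range_iff.2 heven) (hinj'.hasSum_range_iff.2 hodd)).tsum_eq

theorem jacobiTheta_identity_size_two (τ w x : ℂ) (hτ : 0 < τ.im) :
    2 * jTheta ((w - τ) / 4 + x) τ - 2 * jTheta ((w - τ) / 8 + (x + 1) / 2) (τ / 4)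
    = Complex.exp (Real.pi * Complex.I * (w / 4 + x)) * jTheta ((w + τ) / 4 + x) τ
      + Complex.exp (Real.pi * Complex.I * ((2 * τ - w) / 4 - x)) *
          jTheta ((w - 3 * τ) / 4 + x) τ := by
  simp only [jTheta_eq_jacobiTheta₂]
  have hhalf := jacobiTheta₂_half_add_half ((w - τ) / 4 + x) τ hτ
  rw [show ((w - τ) / 4 + x + 1) / 2 = (w - τ) / 8 + (x + 1) / 2 by ring,
    show τ / 4 + ((w - τ) / 4 + x) = w / 4 + x by ring,
    show (w - τ) / 4 + x + τ / 2 = (w + τ) / 4 + x by ring] at hhalf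
  have hquasi := jacobiTheta₂_add_left' ((w - 3 * τ) / 4 + x) τ
  rw [show (w - 3 * τ) / 4 + x + τ = (w + τ) / 4 + x by ring] at hquasi
  have hsecond : Complex.exp (Real.pi * Complex.I * ((2 * τ - w) / 4 - x)) *
      jacobiTheta₂ ((w - 3 * τ) / 4 + x) τ
      = Complex.exp (Real.pi * Complex.I * (w / 4 + x)) * jacobiTheta₂ ((w + τ) / 4 + x) τ := by
    rw [hquasi, ← mul_assoc, ← Complex.exp_add]
    congr 2
    ring
  rw [hhalf, hsecond]
  ring
end

section
/- Let τ ∈ ℂ with Im τ > 0, and let w, x ∈ ℂ be arbitrary. Then (2√3/(1+√3))·θ((w−τ)/6 + x, τ) − √3·[ e^{(πi/3)(w/3 + 2x)}·θ((w+τ)/6 + x, τ) + e^{(πi/3)((2τ−w)/3 − 2x)}·θ((w−3τ)/6 + x, τ) ] = θ((w−τ)/18 + (x+1)/3, τ/9) + θ((w−τ)/18 + (x−1)/3, τ/9) − (2/(1+√3))·θ((w−τ)/18 + x/3, τ/9). -/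
lemma jTheta_summable (z τ : ℂ) (hτ : 0 < τ.im) :
    Summable fun m : ℤ => Complex.exp (Real.pi * Complex.I * τ * (m : ℂ) ^ 2
      + 2 * Real.pi * Complex.I * (m : ℂ) * z) := by
  refine ((summable_jacobiTheta₂_term_iff z τ).2 hτ).congr fun m => ?_
  rw [jacobiTheta₂_term]
  congr 1
  ring

lemma tsum_int_mod_three (f : ℤ → ℂ) (hf : Summable f) :
    ∑' m, f m = ∑' n, f (3 * n) + ∑' n, f (3 * n + 1) + ∑' n, f (3 * n - 1) := by
  have hs : ∀ r : ℤ, Summable fun n : ℤ => f (3 * n + r) := fun r =>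
    hf.comp_injective (i := fun n : ℤ => 3 * n + r) fun a b h => by simp only at h; omega
  have hshift : ∑' n : ℤ, f (3 * n + 2) = ∑' n : ℤ, f (3 * n - 1) := by
    rw [← (Equiv.addRight (1 : ℤ)).tsum_eq fun n => f (3 * n - 1)]
    refine tsum_congr fun n => congrArg f ?_
    simp only [Equiv.coe_addRight]
    ring
  have hf' : Summable fun p : ℤ × Fin 3 => f ((Int.divModEquiv 3).symm p) :=
    (Int.divModEquiv 3).symm.summable_iff.2 hf
  rw [← (Int.divModEquiv 3).symm.tsum_eq f, hf'.tsum_prod, ← hshift]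
  have h0 := hs 0
  simp only [add_zero] at h0
  rw [← h0.tsum_add (hs 1), ← (h0.add (hs 1)).tsum_add (hs 2)]
  refine tsum_congr fun n => ?_
  rw [tsum_fintype, Fin.sum_univ_three]
  simp [Int.divModEquiv, mul_comm]

/-- The sections of the series by residues modulo `3` are theta series with parameter `τ`. -/
lemma jTheta_div_three (v τ : ℂ) (k : ℤ) (hτ : 0 < τ.im) :
    jTheta (v / 3 + k / 3) (τ / 9) = jTheta v τ
      + Complex.exp (2 * Real.pi * Complex.I * k / 3) *
        (Complex.exp (Real.pi * Complex.I / 3 * (τ / 3 + 2 * v)) * jTheta (v + τ / 3) τ)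
      + Complex.exp (-(2 * Real.pi * Complex.I * k / 3)) *
        (Complex.exp (Real.pi * Complex.I / 3 * (τ / 3 - 2 * v)) * jTheta (v - τ / 3) τ) := by
  have h9 : 0 < (τ / 9).im := by
    have h : (τ / 9).im = τ.im / 9 := by simp
    rw [h]
    positivity
  rw [jTheta, tsum_int_mod_three _ (jTheta_summable _ _ h9)]
  simp only [jTheta, ← tsum_mul_left, ← Complex.exp_add]
  congr 1
  · congr 1
    all_goals
      refine tsum_congr fun n => Complex.exp_eq_exp_iff_exists_int.2 ⟨n * k, ?_⟩
      push_cast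
      ring
  · refine tsum_congr fun n => Complex.exp_eq_exp_iff_exists_int.2 ⟨n * k, ?_⟩
    push_cast
    ring

lemma exp_add_exp_neg_third :
    Complex.exp (2 * Real.pi * Complex.I / 3) + Complex.exp (-(2 * Real.pi * Complex.I / 3))
      = -1 := by
  have h : 2 * Complex.cos ((2 * Real.pi / 3 : ℝ) : ℂ) = -1 := by
    rw [← Complex.ofReal_cos, show 2 * Real.pi / 3 = Real.pi - Real.pi / 3 by ring,
      Real.cos_pi_sub, Real.cos_pi_div_three]
    norm_num
  rw [← h, Complex.two_cos]
  congr 2 <;> push_cast <;> ring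

theorem jacobiTheta_identity_size_three (τ w x : ℂ) (hτ : 0 < τ.im) :
    (2 * (Real.sqrt 3 : ℂ) / (1 + (Real.sqrt 3 : ℂ))) * jTheta ((w - τ) / 6 + x) τ
      - (Real.sqrt 3 : ℂ) *
        (Complex.exp (Real.pi * Complex.I / 3 * (w / 3 + 2 * x)) *
            jTheta ((w + τ) / 6 + x) τ
          + Complex.exp (Real.pi * Complex.I / 3 * ((2 * τ - w) / 3 - 2 * x)) *
            jTheta ((w - 3 * τ) / 6 + x) τ)
    = jTheta ((w - τ) / 18 + (x + 1) / 3) (τ / 9)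
      + jTheta ((w - τ) / 18 + (x - 1) / 3) (τ / 9)
      - (2 / (1 + (Real.sqrt 3 : ℂ))) * jTheta ((w - τ) / 18 + x / 3) (τ / 9) := by
  obtain ⟨v, hv⟩ : ∃ v, v = (w - τ) / 6 + x := ⟨_, rfl⟩
  have hp := jTheta_div_three v τ 1 hτ
  have hm := jTheta_div_three v τ (-1) hτ
  have h0 := jTheta_div_three v τ 0 hτ
  rw [show (w - τ) / 18 + (x + 1) / 3 = v / 3 + (1 : ℤ) / 3 by rw [hv]; push_cast; ring,
    show (w - τ) / 18 + (x - 1) / 3 = v / 3 + (-1 : ℤ) / 3 by rw [hv]; push_cast; ring,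
    show (w - τ) / 18 + x / 3 = v / 3 + (0 : ℤ) / 3 by rw [hv]; push_cast; ring,
    hp, hm, h0, ← hv,
    show (w + τ) / 6 + x = v + τ / 3 by rw [hv]; ring,
    show (w - 3 * τ) / 6 + x = v - τ / 3 by rw [hv]; ring,
    show w / 3 + 2 * x = τ / 3 + 2 * v by rw [hv]; ring,
    show (2 * τ - w) / 3 - 2 * x = τ / 3 - 2 * v by rw [hv]; ring]
  generalize Complex.exp (Real.pi * Complex.I / 3 * (τ / 3 + 2 * v)) * jTheta (v + τ / 3) τ = A
  generalize Complex.exp (Real.pi * Complex.I / 3 * (τ / 3 - 2 * v)) * jTheta (v - τ / 3) τ = B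
  have hζ := exp_add_exp_neg_third
  have hs : (Real.sqrt 3 : ℂ) ^ 2 = 3 := by
    rw [← Complex.ofReal_pow, Real.sq_sqrt (by norm_num)]
    norm_num
  have hne : (1 + (Real.sqrt 3 : ℂ)) ≠ 0 := by
    rw [← Complex.ofReal_one, ← Complex.ofReal_add]
    exact Complex.ofReal_ne_zero.2 (by positivity)
  have hc : 2 / (1 + (Real.sqrt 3 : ℂ)) = Real.sqrt 3 - 1 := by
    rw [div_eq_iff hne]
    linear_combination -hs
  rw [mul_div_right_comm, hc]
  simp only [Int.cast_one, Int.cast_neg, Int.cast_zero, mul_one, mul_neg, neg_div, neg_neg,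
    mul_zero, zero_div, neg_zero, Complex.exp_zero, one_mul]
  linear_combination (jTheta v τ) * hs - (A + B) * hζ
end

section
/- Let q be a real number with 0 < q < 1, and let k₁, k₂ be real numbers with k₁ > 0. Then the generating function of the quadratic numbers k₁m² + k₂m satisfies Σ_{m∈ℤ} q^{k₁m² + k₂m} = (1/2)·[ ∏_{k=0}^{∞} (1 − q^{(k₁+2k₂)/4 + k·k₁/2})(1 − q^{(k₁−2k₂)/4 + k·k₁/2})(1 − q^{k₁/2 + k·k₁/2}) + ∏_{k=0}^{∞} (1 + q^{(k₁+2k₂)/4 + k·k₁/2})(1 + q^{(k₁−2k₂)/4 + k·k₁/2})(1 − q^{k₁/2 + k·k₁/2}) ]. -/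
/-!
With `p = q ^ (k₁ / 4)` and `z = q ^ (k₂ / 2)`, the two products are the product sides of the Jacobi
triple product `∑ p ^ (m²) z ^ m = ∏ (1 + z p^(2k+1)) (1 + z⁻¹ p^(2k+1)) (1 - p^(2k+2))` at `-z` and
at `z`. Averaging the two series cancels the odd powers of `z`, and the term at `2m` is
`q ^ (k₁ m² + k₂ m)`.

The triple product (`hasSum_jacobi_triple`) is obtained from its finite form
(`hasSum_finite_jacobi`): `∏_{k<n} (1 + z p^(2k+1)) (1 + z⁻¹ p^(2k+1))` is the sum over `m` of
`[2n choose n+m] p^(m²) z^m`, the `q`-binomial coefficient having base `Q = p²`. This is an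
induction on `n` resting on the three-term recurrence `qCentral_succ`. After multiplication by
`(Q : Q)_n` the coefficients tend to `1` and are bounded by `(Q : Q)_∞⁻²`, so dominated convergence
for series (Tannery's theorem) gives the limit `n → ∞`.
-/

open Filter Topology

/-- The finite `q`-Pochhammer product `(Q : Q)_n = ∏_{i=1}^{n} (1 - Q ^ i)`. -/
noncomputable def qPoch (Q : ℝ) (n : ℕ) : ℝ := ∏ i ∈ Finset.range n, (1 - Q ^ (i + 1))

/-- The reciprocal `1 / (Q : Q)_k`, extended by `0` to negative integers `k`. With this convention
`1 / (Q : Q)_(k-1) = (1 - Q ^ k) / (Q : Q)_k` holds for every integer `k`. -/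
noncomputable def invQPoch (Q : ℝ) (k : ℤ) : ℝ := if 0 ≤ k then (qPoch Q k.toNat)⁻¹ else 0

lemma qPoch_succ (Q : ℝ) (n : ℕ) : qPoch Q (n + 1) = qPoch Q n * (1 - Q ^ (n + 1)) :=
  Finset.prod_range_succ _ _

lemma qPoch_pos {Q : ℝ} (h0 : 0 < Q) (h1 : Q < 1) (n : ℕ) : 0 < qPoch Q n :=
  Finset.prod_pos fun i _ => sub_pos.2 (pow_lt_one₀ h0.le h1 (by omega))

lemma qPoch_antitone {Q : ℝ} (h0 : 0 < Q) (h1 : Q < 1) : Antitone (qPoch Q) := by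
  refine antitone_nat_of_succ_le fun n => ?_
  rw [qPoch_succ]
  exact mul_le_of_le_one_right (qPoch_pos h0 h1 n).le (by have := pow_pos h0 (n + 1); linarith)

lemma qPoch_le_one {Q : ℝ} (h0 : 0 < Q) (h1 : Q < 1) (n : ℕ) : qPoch Q n ≤ 1 := by
  simpa [qPoch] using qPoch_antitone h0 h1 (Nat.zero_le n)

/-- The infinite product `(Q : Q)_∞` converges to a positive limit. -/
lemma exists_tendsto_qPoch {Q : ℝ} (h0 : 0 < Q) (h1 : Q < 1) :
    ∃ L : ℝ, 0 < L ∧ Tendsto (qPoch Q) atTop (𝓝 L) := by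
  have hs : Summable fun i : ℕ => ‖-Q ^ (i + 1)‖ := by
    simpa [abs_of_pos h0] using
      (summable_nat_add_iff 1).2 (summable_geometric_of_lt_one h0.le h1)
  have ht : Tendsto (qPoch Q) atTop (𝓝 (∏' i : ℕ, (1 + -Q ^ (i + 1)))) :=
    (multipliable_one_add_of_summable hs).hasProd.tendsto_prod_nat.congr
      fun n => by simp [qPoch, sub_eq_add_neg]
  have hne : ∏' i : ℕ, (1 + -Q ^ (i + 1)) ≠ 0 :=
    tprod_one_add_ne_zero_of_summable
      (fun i => by
        have : Q ^ (i + 1) < 1 := pow_lt_one₀ h0.le h1 (Nat.succ_ne_zero i)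
        exact (by linarith : (0 : ℝ) < 1 + -Q ^ (i + 1)).ne') hs
  exact ⟨_, lt_of_le_of_ne (ge_of_tendsto' ht fun n => (qPoch_pos h0 h1 n).le) hne.symm, ht⟩

lemma invQPoch_sub_one {Q : ℝ} (h0 : 0 < Q) (h1 : Q < 1) (k : ℤ) :
    invQPoch Q (k - 1) = (1 - Q ^ k) * invQPoch Q k := by
  rcases lt_trichotomy k 0 with h | rfl | h
  · simp [invQPoch, show ¬ (0 ≤ k) by omega, show ¬ (1 ≤ k) by omega]
  · simp [invQPoch]
  · obtain ⟨n, rfl⟩ : ∃ n : ℕ, k = n + 1 := ⟨(k - 1).toNat, by omega⟩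
    have h2 : (0 : ℝ) < 1 - Q ^ (n + 1) := sub_pos.2 (pow_lt_one₀ h0.le h1 (by omega))
    have h3 := (qPoch_pos h0 h1 n).ne'
    have e : (Q : ℝ) ^ ((n : ℤ) + 1) = Q ^ (n + 1) := by exact_mod_cast zpow_natCast Q (n + 1)
    have e2 : ((n : ℤ) + 1).toNat = n + 1 := by omega
    rw [e]
    simp only [invQPoch, add_sub_cancel_right, e2, Int.toNat_natCast, qPoch_succ,
      if_pos (show (0 : ℤ) ≤ n by omega), if_pos (show (0 : ℤ) ≤ n + 1 by omega)]
    field_simp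

lemma invQPoch_nonneg {Q : ℝ} (h0 : 0 < Q) (h1 : Q < 1) (k : ℤ) : 0 ≤ invQPoch Q k := by
  unfold invQPoch
  split_ifs
  · exact inv_nonneg.2 (qPoch_pos h0 h1 _).le
  · rfl

lemma invQPoch_le {Q L : ℝ} (h0 : 0 < Q) (h1 : Q < 1) (hL : 0 < L)
    (ht : Tendsto (qPoch Q) atTop (𝓝 L)) (k : ℤ) : invQPoch Q k ≤ L⁻¹ := by
  unfold invQPoch
  split_ifs
  · exact inv_anti₀ hL ((qPoch_antitone h0 h1).le_of_tendsto ht _)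
  · positivity

lemma tendsto_invQPoch {Q L : ℝ} (hL : 0 < L) (ht : Tendsto (qPoch Q) atTop (𝓝 L)) (m : ℤ) :
    Tendsto (fun n : ℕ => invQPoch Q (n + m)) atTop (𝓝 L⁻¹) := by
  have h1 : Tendsto (fun n : ℕ => ((n : ℤ) + m).toNat) atTop atTop :=
    tendsto_atTop.2 fun b => by
      filter_upwards [eventually_ge_atTop (b + m.natAbs)] with n hn
      omega
  refine ((ht.comp h1).inv₀ hL.ne').congr' ?_
  filter_upwards [eventually_ge_atTop m.natAbs] with n hn
  simp [invQPoch, show 0 ≤ (n : ℤ) + m by omega]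

/-- The central `q`-binomial coefficient `[2n choose n+m]` with base `Q`. It vanishes for `|m| > n`,
by the convention in `invQPoch`, so it may be summed over all integers `m`. -/
noncomputable def qCentral (Q : ℝ) (n : ℕ) (m : ℤ) : ℝ :=
  qPoch Q (2 * n) * invQPoch Q (n - m) * invQPoch Q (n + m)

/-- The recurrence that corresponds to multiplying the finite triple product by
`(1 + z p^(2n+1)) (1 + z⁻¹ p^(2n+1))`, with `Q = p²`. After factoring out
`(Q : Q)_(2n) / ((Q : Q)_(n+1-m) (Q : Q)_(n+1+m))` it is a polynomial identity in
`Q ^ (n - m)`, `Q ^ (n + m)` and `Q`. -/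
lemma qCentral_succ {Q : ℝ} (h0 : 0 < Q) (h1 : Q < 1) (n : ℕ) (m : ℤ) :
    qCentral Q (n + 1) m = (1 + Q ^ (2 * n + 1)) * qCentral Q n m
      + Q ^ ((n : ℤ) + 1 - m) * qCentral Q n (m - 1)
      + Q ^ ((n : ℤ) + 1 + m) * qCentral Q n (m + 1) := by
  have hA := invQPoch_sub_one h0 h1 ((n : ℤ) + 1 - m)
  have hA' := invQPoch_sub_one h0 h1 ((n : ℤ) - m)
  have hB := invQPoch_sub_one h0 h1 ((n : ℤ) + 1 + m)
  have hB' := invQPoch_sub_one h0 h1 ((n : ℤ) + m)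
  rw [show (n : ℤ) + 1 - m - 1 = n - m by ring] at hA
  rw [show (n : ℤ) + 1 + m - 1 = n + m by ring] at hB
  have hx : Q ^ ((n : ℤ) + 1 - m) = Q ^ ((n : ℤ) - m) * Q := by
    rw [← zpow_add_one₀ h0.ne']; ring_nf
  have hy : Q ^ ((n : ℤ) + 1 + m) = Q ^ ((n : ℤ) + m) * Q := by
    rw [← zpow_add_one₀ h0.ne']; ring_nf
  have hxy : Q ^ (2 * n) = Q ^ ((n : ℤ) - m) * Q ^ ((n : ℤ) + m) := by
    rw [← zpow_add₀ h0.ne', ← zpow_natCast]; push_cast; ring_nf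
  have hP : qPoch Q (2 * (n + 1))
      = qPoch Q (2 * n) * (1 - Q ^ (2 * n) * Q) * (1 - Q ^ (2 * n) * Q * Q) := by
    rw [show 2 * (n + 1) = 2 * n + 1 + 1 by ring, qPoch_succ, qPoch_succ]; ring
  unfold qCentral
  rw [hP, show (n : ℤ) - (m - 1) = n + 1 - m by ring, show (n : ℤ) + (m - 1) = n + m - 1 by ring,
    show (n : ℤ) - (m + 1) = n - m - 1 by ring, show (n : ℤ) + (m + 1) = n + 1 + m by ring,
    pow_succ Q (2 * n), hA', hB', hA, hB, hx, hy, hxy]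
  push_cast
  ring

/-- The finite form of the Jacobi triple product; only the terms with `|m| ≤ n` are nonzero. -/
lemma hasSum_finite_jacobi {p z : ℝ} (h0 : 0 < p) (h1 : p < 1) (hz : z ≠ 0) (n : ℕ) :
    HasSum (fun m : ℤ => qCentral (p ^ 2) n m * (p ^ (m * m) * z ^ m))
      (∏ k ∈ Finset.range n, ((1 + z * p ^ (2 * k + 1)) * (1 + z⁻¹ * p ^ (2 * k + 1)))) := by
  have hQ0 : 0 < p ^ 2 := by positivity
  have hQ1 : p ^ 2 < 1 := pow_lt_one₀ h0.le h1 (by norm_num)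
  induction n with
  | zero =>
    have := hasSum_single (f := fun m : ℤ => qCentral (p ^ 2) 0 m * (p ^ (m * m) * z ^ m)) 0
      (fun m hm => by
        rcases lt_or_gt_of_ne hm with h | h
        · simp [qCentral, invQPoch, show ¬ (0 ≤ m) by omega]
        · simp [qCentral, invQPoch, show ¬ (m ≤ 0) by omega])
    simpa [qCentral, invQPoch, qPoch] using this
  | succ n ih =>
    rw [Finset.prod_range_succ]
    -- shifting `m` by one accounts for the factors `z` and `z⁻¹`
    have hm := (Equiv.subRight (1 : ℤ)).hasSum_iff.2 ih
    have hp := (Equiv.addRight (1 : ℤ)).hasSum_iff.2 ih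
    have := ((ih.mul_left (1 + (p ^ 2) ^ (2 * n + 1))).add
      (hm.mul_left (z * p ^ (2 * n + 1)))).add (hp.mul_left (z⁻¹ * p ^ (2 * n + 1)))
    convert! this using 1
    · funext m
      have e1 : (p ^ 2) ^ ((n : ℤ) + 1 - m) * p ^ (m * m)
          = p ^ (2 * n + 1) * p ^ ((m - 1) * (m - 1)) := by
        rw [← zpow_natCast p 2, ← zpow_mul, ← zpow_add₀ h0.ne', ← zpow_natCast p (2 * n + 1),
          ← zpow_add₀ h0.ne']
        congr 1; push_cast; ring
      have e2 : (p ^ 2) ^ ((n : ℤ) + 1 + m) * p ^ (m * m)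
          = p ^ (2 * n + 1) * p ^ ((m + 1) * (m + 1)) := by
        rw [← zpow_natCast p 2, ← zpow_mul, ← zpow_add₀ h0.ne', ← zpow_natCast p (2 * n + 1),
          ← zpow_add₀ h0.ne']
        congr 1; push_cast; ring
      have z1 : z ^ m = z * z ^ (m - 1) := by rw [← zpow_one_add₀ hz]; ring_nf
      have z2 : z ^ m = z⁻¹ * z ^ (m + 1) := by rw [zpow_add_one₀ hz]; field_simp
      simp only [Function.comp, Equiv.subRight_apply, Equiv.coe_addRight]
      rw [qCentral_succ hQ0 hQ1]
      linear_combination (qCentral (p ^ 2) n (m - 1) * z ^ m) * e1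
        + (qCentral (p ^ 2) n (m + 1) * z ^ m) * e2
        + qCentral (p ^ 2) n (m - 1) * p ^ (2 * n + 1) * p ^ ((m - 1) * (m - 1)) * z1
        + qCentral (p ^ 2) n (m + 1) * p ^ (2 * n + 1) * p ^ ((m + 1) * (m + 1)) * z2
    · field_simp
      ring

/-- The term is `(p ^ n * w) ^ n`, which is eventually at most `(1 / 2) ^ n`. -/
lemma summable_theta_nat {p w : ℝ} (h0 : 0 < p) (h1 : p < 1) (hw : 0 < w) :
    Summable fun n : ℕ => p ^ (n * n) * w ^ n := by
  have ht : Tendsto (fun n : ℕ => p ^ n * w) atTop (𝓝 0) := by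
    simpa using (tendsto_pow_atTop_nhds_zero_of_lt_one h0.le h1).mul_const w
  refine summable_of_isBigO_nat summable_geometric_two (Asymptotics.IsBigO.of_bound 1 ?_)
  filter_upwards [ht.eventually_le_const (show (0 : ℝ) < 1 / 2 by norm_num)] with n hn
  rw [pow_mul, ← mul_pow, one_mul, Real.norm_of_nonneg (by positivity),
    Real.norm_of_nonneg (by positivity)]
  exact pow_le_pow_left₀ (by positivity) hn n

lemma summable_theta {p w : ℝ} (h0 : 0 < p) (h1 : p < 1) (hw : 0 < w) :
    Summable fun m : ℤ => p ^ (m * m) * w ^ m := by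
  refine Summable.of_nat_of_neg ?_ ?_
  · refine (summable_theta_nat h0 h1 hw).congr fun n => ?_
    rw [← Nat.cast_mul, zpow_natCast, zpow_natCast]
  · refine (summable_theta_nat h0 h1 (inv_pos.2 hw)).congr fun n => ?_
    rw [neg_mul_neg, ← Nat.cast_mul, zpow_natCast, zpow_neg, zpow_natCast, inv_pow]

lemma multipliable_one_add_mul_pow {p : ℝ} (h0 : 0 < p) (h1 : p < 1) (c : ℝ) (j : ℕ) :
    Multipliable fun k : ℕ => 1 + c * p ^ (2 * k + j) := by
  refine multipliable_one_add_of_summable (Summable.norm ?_)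
  refine ((summable_geometric_of_lt_one (sq_nonneg p)
    (pow_lt_one₀ h0.le h1 two_ne_zero)).mul_left (c * p ^ j)).congr fun k => ?_
  rw [pow_add, pow_mul]; ring

/-- The Jacobi triple product identity for real `p ∈ (0, 1)` and `z ≠ 0`. -/
theorem hasSum_jacobi_triple {p z : ℝ} (h0 : 0 < p) (h1 : p < 1) (hz : z ≠ 0) :
    HasSum (fun m : ℤ => p ^ (m * m) * z ^ m)
      (∏' k : ℕ, ((1 + z * p ^ (2 * k + 1)) * (1 + z⁻¹ * p ^ (2 * k + 1))
        * (1 - p ^ (2 * k + 2)))) := by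
  have hQ0 : 0 < p ^ 2 := by positivity
  have hQ1 : p ^ 2 < 1 := pow_lt_one₀ h0.le h1 (by norm_num)
  obtain ⟨L, hL, ht⟩ := exists_tendsto_qPoch hQ0 hQ1
  have hnorm : (fun m : ℤ => ‖p ^ (m * m) * z ^ m‖) = fun m : ℤ => p ^ (m * m) * |z| ^ m := by
    funext m
    rw [norm_mul, norm_zpow, norm_zpow, Real.norm_of_nonneg h0.le, Real.norm_eq_abs]
  have hsn : Summable fun m : ℤ => ‖p ^ (m * m) * z ^ m‖ := by
    rw [hnorm]; exact summable_theta h0 h1 (abs_pos.2 hz)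
  have hmult : Multipliable fun k : ℕ => (1 + z * p ^ (2 * k + 1)) * (1 + z⁻¹ * p ^ (2 * k + 1))
        * (1 - p ^ (2 * k + 2)) :=
    ((multipliable_one_add_mul_pow h0 h1 z 1).mul (multipliable_one_add_mul_pow h0 h1 z⁻¹ 1)).mul
      ((multipliable_one_add_mul_pow h0 h1 (-1) 2).congr fun k => by ring)
  have hprod := hmult.hasProd.tendsto_prod_nat
  -- Tannery's theorem, with dominating series `L⁻² |p ^ (m²) z ^ m|`
  have hT : Tendsto (fun n : ℕ => ∑' m : ℤ,
      qPoch (p ^ 2) n * (qCentral (p ^ 2) n m * (p ^ (m * m) * z ^ m))) atTop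
      (𝓝 (∑' m : ℤ, p ^ (m * m) * z ^ m)) := by
    refine tendsto_tsum_of_dominated_convergence (hsn.mul_left (L⁻¹ * L⁻¹)) (fun m => ?_)
      (Eventually.of_forall fun n m => ?_)
    · have h2 : Tendsto (fun n : ℕ => qPoch (p ^ 2) (2 * n)) atTop (𝓝 L) :=
        ht.comp (tendsto_id.const_mul_atTop' two_pos)
      have := (ht.mul ((h2.mul (tendsto_invQPoch hL ht (-m))).mul
        (tendsto_invQPoch hL ht m))).mul_const (p ^ (m * m) * z ^ m)
      rw [show L * (L * L⁻¹ * L⁻¹) = 1 by field_simp, one_mul] at this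
      refine this.congr fun n => ?_
      simp only [qCentral, ← sub_eq_add_neg]; ring
    · rw [← mul_assoc, norm_mul]
      refine mul_le_mul_of_nonneg_right ?_ (norm_nonneg _)
      have n1 := invQPoch_nonneg hQ0 hQ1 (n - m)
      have n2 := invQPoch_nonneg hQ0 hQ1 (n + m)
      have p1 := (qPoch_pos hQ0 hQ1 n).le
      have p2 := (qPoch_pos hQ0 hQ1 (2 * n)).le
      unfold qCentral
      rw [Real.norm_of_nonneg (by positivity)]
      calc _ ≤ 1 * (1 * L⁻¹ * L⁻¹) := by
            gcongr
            · exact qPoch_le_one hQ0 hQ1 n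
            · exact qPoch_le_one hQ0 hQ1 (2 * n)
            · exact invQPoch_le hQ0 hQ1 hL ht _
            · exact invQPoch_le hQ0 hQ1 hL ht _
        _ = _ := by ring
  have heq : ∑' m : ℤ, p ^ (m * m) * z ^ m = ∏' k : ℕ, ((1 + z * p ^ (2 * k + 1))
      * (1 + z⁻¹ * p ^ (2 * k + 1)) * (1 - p ^ (2 * k + 2))) := by
    refine tendsto_nhds_unique hT (hprod.congr fun n => ?_)
    rw [((hasSum_finite_jacobi h0 h1 hz n).mul_left _).tsum_eq, Finset.prod_mul_distrib, mul_comm]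
    congr 1
    exact Finset.prod_congr rfl fun k _ => by ring
  rw [← heq]
  exact hsn.of_norm.hasSum

theorem quadratic_numbers_generating_function (q k₁ k₂ : ℝ)
    (hq0 : 0 < q) (hq1 : q < 1) (hk : 0 < k₁) :
    ∑' m : ℤ, q ^ (k₁ * (m : ℝ) ^ 2 + k₂ * (m : ℝ))
    = (1 / 2) *
      ((∏' k : ℕ, ((1 - q ^ ((k₁ + 2 * k₂) / 4 + (k : ℝ) * (k₁ / 2)))
          * (1 - q ^ ((k₁ - 2 * k₂) / 4 + (k : ℝ) * (k₁ / 2)))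
          * (1 - q ^ (k₁ / 2 + (k : ℝ) * (k₁ / 2)))))
        + ∏' k : ℕ, ((1 + q ^ ((k₁ + 2 * k₂) / 4 + (k : ℝ) * (k₁ / 2)))
            * (1 + q ^ ((k₁ - 2 * k₂) / 4 + (k : ℝ) * (k₁ / 2)))
            * (1 - q ^ (k₁ / 2 + (k : ℝ) * (k₁ / 2))))) := by
  obtain ⟨p, hp⟩ : ∃ p, p = q ^ (k₁ / 4) := ⟨_, rfl⟩
  obtain ⟨z, hz⟩ : ∃ z, z = q ^ (k₂ / 2) := ⟨_, rfl⟩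
  have h0 : 0 < p := hp ▸ Real.rpow_pos_of_pos hq0 _
  have h1 : p < 1 := hp ▸ Real.rpow_lt_one hq0.le hq1 (by positivity)
  have hz0 : 0 < z := hz ▸ Real.rpow_pos_of_pos hq0 _
  have e1 (k : ℕ) : q ^ ((k₁ + 2 * k₂) / 4 + (k : ℝ) * (k₁ / 2)) = z * p ^ (2 * k + 1) := by
    rw [hz, hp, ← Real.rpow_mul_natCast hq0.le, ← Real.rpow_add hq0]
    congr 1; push_cast; ring
  have e2 (k : ℕ) : q ^ ((k₁ - 2 * k₂) / 4 + (k : ℝ) * (k₁ / 2)) = z⁻¹ * p ^ (2 * k + 1) := by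
    rw [hz, hp, ← Real.rpow_neg hq0.le, ← Real.rpow_mul_natCast hq0.le, ← Real.rpow_add hq0]
    congr 1; push_cast; ring
  have e3 (k : ℕ) : q ^ (k₁ / 2 + (k : ℝ) * (k₁ / 2)) = p ^ (2 * k + 2) := by
    rw [hp, ← Real.rpow_mul_natCast hq0.le]
    congr 1; push_cast; ring
  have e4 (m : ℤ) : q ^ (k₁ * (m : ℝ) ^ 2 + k₂ * (m : ℝ))
      = p ^ ((2 * m) * (2 * m)) * z ^ (2 * m) := by
    rw [hz, hp, ← Real.rpow_mul_intCast hq0.le, ← Real.rpow_mul_intCast hq0.le,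
      ← Real.rpow_add hq0]
    congr 1; push_cast; ring
  have hS := ((hasSum_jacobi_triple h0 h1 (neg_ne_zero.2 hz0.ne')).add
    (hasSum_jacobi_triple h0 h1 hz0.ne')).mul_left (1 / 2)
  -- averaging over the signs of `z` kills the odd powers
  have hinj : Function.Injective fun m : ℤ => 2 * m := fun a b h => by simpa using h
  have hE := (hinj.hasSum_iff (fun m hm => by
    have hodd : Odd m := by
      rw [← Int.not_even_iff_odd]
      rintro ⟨r, hr⟩
      exact hm ⟨r, by simp only; omega⟩
    rw [hodd.neg_zpow]; ring)).2 hS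
  simp only [e1, e2, e3, e4]
  refine Eq.trans (tsum_congr fun m => ?_) (hE.tsum_eq.trans ?_)
  · simp only [Function.comp, (even_two_mul m).neg_zpow]; ring
  · simp only [inv_neg, neg_mul, ← sub_eq_add_neg]
end

section
/- Let q be a real number with 0 < q < 1. Then the generating function for the square numbers m² satisfies 2 + 4·Σ_{m=1}^{∞} q^{m²} = ∏_{k=0}^{∞} (1 − q^{(k+1)/2}) · [ ∏_{k=0}^{∞} (1 − q^{(2k+1)/4})² + ∏_{k=0}^{∞} (1 + q^{(2k+1)/4})² ]. -/
/-!
Put `x = q ^ (1/4)`. The Jacobi triple product at `z = ±1` reads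
`∏ (1 - x^(2k+2)) * ∏ (1 + z x^(2k+1))^2 = ∑_{j ∈ ℤ} z^j x^(j^2)`. Adding the cases `z = 1` and
`z = -1` kills the odd `j` and doubles the even ones, leaving `2 ∑_{m ∈ ℤ} x^(4m^2)`, which is
`2 ∑_{m ∈ ℤ} q^(m^2) = 2 + 4 ∑_{m ≥ 1} q^(m^2)`.

The triple product is obtained from its finite form
`∏_{k<n} (1 + z x^(2k+1)) (1 + z⁻¹ x^(2k+1)) = ∑_j z^j x^(j^2) Q_{2n} / (Q_{n-j} Q_{n+j})`, where
`Q_m = ∏_{k<m} (1 - x^(2k+2))` (`hasSum_finite_triple`). It is proved by induction on `n` by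
comparing coefficients (`coeff_succ`), with `1 / Q_m` read as `0` for `m < 0` so that the sum may
run over all of `ℤ`. Dominated convergence then gives the limit `n → ∞` (`triple_product`).
-/

open Filter Topology

namespace SquareGF

/-- The finite product `∏_{k<n} (1 - x^(2k+2))`, that is `(x²; x²)_n`. -/
noncomputable def Q (x : ℝ) (n : ℕ) : ℝ := ∏ k ∈ Finset.range n, (1 - x ^ (2 * (k + 1)))

/-- The reciprocal of `Q x m`, extended by `0` to negative `m`. -/
noncomputable def R (x : ℝ) (m : ℤ) : ℝ := if 0 ≤ m then (Q x m.toNat)⁻¹ else 0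

/-- The coefficient of `z ^ j` in `∏_{k<n} (1 + z x^(2k+1)) (1 + z⁻¹ x^(2k+1))`. -/
noncomputable def coeff (x : ℝ) (n : ℕ) (j : ℤ) : ℝ :=
  x ^ (j ^ 2) * (Q x (2 * n) * (R x (n - j) * R x (n + j)))

variable {x : ℝ}

lemma factor_pos (h0 : 0 < x) (h1 : x < 1) (k : ℕ) : 0 < 1 - x ^ (2 * (k + 1)) :=
  sub_pos.2 (pow_lt_one₀ h0.le h1 (by omega))

lemma Q_pos (h0 : 0 < x) (h1 : x < 1) (n : ℕ) : 0 < Q x n :=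
  Finset.prod_pos fun k _ => factor_pos h0 h1 k

lemma Q_succ (x : ℝ) (n : ℕ) : Q x (n + 1) = Q x n * (1 - x ^ (2 * (n + 1))) :=
  Finset.prod_range_succ _ _

/-- Thanks to the extension by zero, this recurrence holds for every integer `m`: at `m = 0` both
sides vanish. -/
lemma R_pred (h0 : 0 < x) (h1 : x < 1) (m : ℤ) : R x (m - 1) = (1 - x ^ (2 * m)) * R x m := by
  rcases lt_trichotomy m 0 with h | rfl | h
  · rw [R, R, if_neg (by omega), if_neg (by omega), mul_zero]
  · simp [R]
  · obtain ⟨n, rfl⟩ : ∃ n : ℕ, m = n + 1 := ⟨(m - 1).toNat, by omega⟩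
    have e : x ^ (2 * ((n : ℤ) + 1)) = x ^ (2 * (n + 1)) := by
      rw [← zpow_natCast]; push_cast; rfl
    have hR : R x ((n : ℤ) + 1) = (Q x (n + 1))⁻¹ := by
      rw [R, if_pos (by omega)]; rfl
    have hR' : R x ((n : ℤ) + 1 - 1) = (Q x n)⁻¹ := by
      rw [R, if_pos (by omega)]; simp
    rw [hR, hR', e, Q_succ]
    have := (Q_pos h0 h1 n).ne'
    have := (factor_pos h0 h1 n).ne'
    field_simp

/-- Multiplication by `(1 + z y) (1 + z⁻¹ y)`, where `y = x^(2n+1)`, on the level of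
coefficients. -/
lemma coeff_succ (h0 : 0 < x) (h1 : x < 1) (n : ℕ) (j : ℤ) :
    coeff x (n + 1) j = (1 + (x ^ (2 * n + 1)) ^ 2) * coeff x n j
      + x ^ (2 * n + 1) * coeff x n (j - 1) + x ^ (2 * n + 1) * coeff x n (j + 1) := by
  have hx : x ≠ 0 := h0.ne'
  have a1 := R_pred h0 h1 (n + 1 - j)
  have a2 := R_pred h0 h1 (n - j)
  have b1 := R_pred h0 h1 (n + 1 + j)
  have b2 := R_pred h0 h1 (n + j)
  rw [show (n + 1 - j - 1 : ℤ) = n - j by ring] at a1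
  rw [show (n + 1 + j - 1 : ℤ) = n + j by ring] at b1
  -- In terms of `u` and `v` the claim is a polynomial identity.
  obtain ⟨u, hu⟩ : ∃ u, u = x ^ (2 * (n + 1 - j : ℤ)) := ⟨_, rfl⟩
  obtain ⟨v, hv⟩ : ∃ v, v = x ^ (2 * (n + 1 + j : ℤ)) := ⟨_, rfl⟩
  have hu2 : x ^ (2 * (n - j : ℤ)) = u / x ^ 2 := by
    rw [hu, ← zpow_natCast x 2, ← zpow_sub₀ hx]; congr 1; push_cast; ring
  have hv2 : x ^ (2 * (n + j : ℤ)) = v / x ^ 2 := by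
    rw [hv, ← zpow_natCast x 2, ← zpow_sub₀ hx]; congr 1; push_cast; ring
  have hy2 : (x ^ (2 * n + 1)) ^ 2 = u * v / x ^ 2 := by
    rw [hu, hv, ← zpow_natCast x 2, ← zpow_add₀ hx, ← zpow_sub₀ hx, ← pow_mul, ← zpow_natCast]
    congr 1; push_cast; ring
  have hq1 : x ^ (2 * (2 * n + 1)) = u * v / x ^ 2 := by rw [← hy2, ← pow_mul, mul_comm]
  have hq2 : x ^ (2 * (2 * n + 1 + 1)) = u * v := by
    rw [hu, hv, ← zpow_add₀ hx, ← zpow_natCast]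
    congr 1; push_cast; ring
  have hyu : x ^ (2 * n + 1) * x ^ ((j - 1) ^ 2) = u * x ^ (j ^ 2) := by
    rw [hu, ← zpow_natCast, ← zpow_add₀ hx, ← zpow_add₀ hx]
    congr 1; push_cast; ring
  have hyv : x ^ (2 * n + 1) * x ^ ((j + 1) ^ 2) = v * x ^ (j ^ 2) := by
    rw [hv, ← zpow_natCast, ← zpow_add₀ hx, ← zpow_add₀ hx]
    congr 1; push_cast; ring
  rw [← hu] at a1
  rw [← hv] at b1
  rw [hu2] at a2
  rw [hv2] at b2
  have c1 : coeff x (n + 1) j = x ^ (j ^ 2) * (Q x (2 * n) * (1 - u * v / x ^ 2) * (1 - u * v)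
      * (R x (n + 1 - j) * R x (n + 1 + j))) := by
    rw [coeff, show 2 * (n + 1) = 2 * n + 1 + 1 by ring, Q_succ, Q_succ, hq1, hq2]
    push_cast; ring
  have c2 : x ^ (2 * n + 1) * coeff x n (j - 1) = u * x ^ (j ^ 2) * (Q x (2 * n) *
      (R x (n + 1 - j) * ((1 - v / x ^ 2) * ((1 - v) * R x (n + 1 + j))))) := by
    rw [coeff, ← mul_assoc, hyu, show (n - (j - 1) : ℤ) = n + 1 - j by ring,
      show (n + (j - 1) : ℤ) = n + j - 1 by ring, b2, b1]
  have c3 : x ^ (2 * n + 1) * coeff x n (j + 1) = v * x ^ (j ^ 2) * (Q x (2 * n) *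
      (((1 - u / x ^ 2) * ((1 - u) * R x (n + 1 - j))) * R x (n + 1 + j))) := by
    rw [coeff, ← mul_assoc, hyv, show (n - (j + 1) : ℤ) = n - j - 1 by ring,
      show (n + (j + 1) : ℤ) = n + 1 + j by ring, a2, a1]
  rw [c1, c2, c3, hy2, coeff, a1, b1]
  ring

/-- The finite form of the Jacobi triple product. -/
lemma hasSum_finite_triple (h0 : 0 < x) (h1 : x < 1) {z : ℝ} (hz : z ≠ 0) (n : ℕ) :
    HasSum (fun j : ℤ => z ^ j * coeff x n j)
      (∏ k ∈ Finset.range n, (1 + z * x ^ (2 * k + 1)) * (1 + z⁻¹ * x ^ (2 * k + 1))) := by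
  induction n with
  | zero =>
    have := hasSum_single (f := fun j : ℤ => z ^ j * coeff x 0 j) 0 (by
      intro j hj
      rcases lt_or_gt_of_ne hj with h | h
      · simp [coeff, R, not_le.2 h]
      · simp [coeff, R, not_le.2 h])
    simpa [coeff, R, Q] using this
  | succ n ih =>
    have s1 := (Equiv.subRight (1 : ℤ)).hasSum_iff.2 ih
    have s2 := (Equiv.addRight (1 : ℤ)).hasSum_iff.2 ih
    rw [Finset.prod_range_succ]
    have s3 := ((ih.mul_left (1 + (x ^ (2 * n + 1)) ^ 2)).add
      (s1.mul_left (z * x ^ (2 * n + 1)))).add (s2.mul_left (z⁻¹ * x ^ (2 * n + 1)))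
    rw [show ∀ P : ℝ, P * ((1 + z * x ^ (2 * n + 1)) * (1 + z⁻¹ * x ^ (2 * n + 1))) =
        (1 + (x ^ (2 * n + 1)) ^ 2) * P + z * x ^ (2 * n + 1) * P + z⁻¹ * x ^ (2 * n + 1) * P from
      fun P => by field_simp; ring]
    convert! s3 using 1
    funext j
    simp only [Function.comp, Equiv.subRight_apply, Equiv.coe_addRight]
    rw [coeff_succ h0 h1, zpow_sub_one₀ hz, zpow_add_one₀ hz]
    field_simp

lemma summable_factor (h0 : 0 < x) (h1 : x < 1) :
    Summable fun k : ℕ => x ^ (2 * (k + 1)) :=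
  (summable_geometric_of_lt_one h0.le h1).comp_injective
    (i := fun k : ℕ => 2 * (k + 1)) (fun a b h => by simpa using h)

lemma summable_odd (h0 : 0 < x) (h1 : x < 1) :
    Summable fun k : ℕ => x ^ (2 * k + 1) :=
  (summable_geometric_of_lt_one h0.le h1).comp_injective
    (i := fun k : ℕ => 2 * k + 1) (fun a b h => by simpa using h)

lemma tendsto_Q (h0 : 0 < x) (h1 : x < 1) :
    Tendsto (Q x) atTop (𝓝 (∏' k : ℕ, (1 - x ^ (2 * (k + 1))))) := by
  have := (Real.multipliable_one_add_of_summable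
    (summable_factor h0 h1).neg).hasProd.tendsto_prod_nat
  simp only [← sub_eq_add_neg] at this
  exact this

lemma antitone_Q (h0 : 0 < x) (h1 : x < 1) : Antitone (Q x) := by
  refine antitone_nat_of_succ_le fun n => ?_
  rw [Q_succ]
  have : 0 < x ^ (2 * (n + 1)) := by positivity
  exact mul_le_of_le_one_right (Q_pos h0 h1 n).le (by linarith)

lemma Qinf_pos (h0 : 0 < x) (h1 : x < 1) : 0 < ∏' k : ℕ, (1 - x ^ (2 * (k + 1))) := by
  refine lt_of_le_of_ne (ge_of_tendsto' (tendsto_Q h0 h1) fun n => (Q_pos h0 h1 n).le) ?_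
  have := tprod_one_add_ne_zero_of_summable (f := fun k : ℕ => - x ^ (2 * (k + 1)))
    (fun k => by simpa only [← sub_eq_add_neg] using (factor_pos h0 h1 k).ne')
    (summable_factor h0 h1).neg.norm
  simpa only [← sub_eq_add_neg] using this.symm

lemma R_nonneg (h0 : 0 < x) (h1 : x < 1) (m : ℤ) : 0 ≤ R x m := by
  unfold R
  split_ifs
  · exact (inv_pos.2 (Q_pos h0 h1 _)).le
  · rfl

lemma R_le (h0 : 0 < x) (h1 : x < 1) (m : ℤ) :
    R x m ≤ (∏' k : ℕ, (1 - x ^ (2 * (k + 1))))⁻¹ := by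
  unfold R
  split_ifs
  · exact inv_anti₀ (Qinf_pos h0 h1) ((antitone_Q h0 h1).le_of_tendsto (tendsto_Q h0 h1) _)
  · exact (inv_pos.2 (Qinf_pos h0 h1)).le

lemma tendsto_R (h0 : 0 < x) (h1 : x < 1) :
    Tendsto (R x) atTop (𝓝 (∏' k : ℕ, (1 - x ^ (2 * (k + 1))))⁻¹) := by
  have ht : Tendsto Int.toNat atTop atTop :=
    tendsto_atTop.2 fun b => (eventually_ge_atTop (b : ℤ)).mono fun m hm => by omega
  refine (((tendsto_Q h0 h1).inv₀ (Qinf_pos h0 h1).ne').comp ht).congr' ?_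
  filter_upwards [eventually_ge_atTop 0] with m hm
  simp [R, hm]

lemma summable_sq (h0 : 0 < x) (h1 : x < 1) : Summable fun j : ℤ => x ^ (j ^ 2) := by
  have hn : Summable fun n : ℕ => x ^ ((n : ℤ) ^ 2) := by
    refine Summable.of_nonneg_of_le (fun n => by positivity) (fun n => ?_)
      (summable_geometric_of_lt_one h0.le h1)
    rw [← Nat.cast_pow, zpow_natCast]
    exact pow_le_pow_of_le_one h0.le h1.le (Nat.le_self_pow two_ne_zero n)
  exact Summable.of_nat_of_neg hn (by simpa using hn)

/-- The Jacobi triple product at `z = ±1`. -/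
lemma triple_product (h0 : 0 < x) (h1 : x < 1) {z : ℝ} (hz : z ^ 2 = 1) :
    HasSum (fun j : ℤ => z ^ j * x ^ (j ^ 2))
      ((∏' k : ℕ, (1 - x ^ (2 * (k + 1)))) * ∏' k : ℕ, (1 + z * x ^ (2 * k + 1)) ^ 2) := by
  have hz0 : z ≠ 0 := by rintro rfl; norm_num at hz
  have hinv : z⁻¹ = z := by field_simp; exact hz.symm
  have habs : |z| = 1 := by
    rcases (by simpa using hz : z = 1 ∨ z = -1) with h | h <;> simp [h]
  set L := ∏' k : ℕ, (1 - x ^ (2 * (k + 1))) with hL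
  have hLpos : 0 < L := Qinf_pos h0 h1
  have hP : Tendsto (fun n => ∏ k ∈ Finset.range n, (1 + z * x ^ (2 * k + 1)) ^ 2) atTop
      (𝓝 (∏' k : ℕ, (1 + z * x ^ (2 * k + 1)) ^ 2)) := by
    have hm := Real.multipliable_one_add_of_summable ((summable_odd h0 h1).mul_left z)
    have hm2 := hm.mul hm
    simp only [← sq] at hm2
    exact hm2.hasProd.tendsto_prod_nat
  have hsum : Summable fun j : ℤ => z ^ j * x ^ (j ^ 2) := by
    refine Summable.of_norm ((summable_sq h0 h1).congr fun j => ?_)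
    rw [norm_mul, norm_zpow, Real.norm_eq_abs, Real.norm_eq_abs, habs, one_zpow, one_mul,
      abs_of_pos (zpow_pos h0 _)]
  have hD : Tendsto (fun n : ℕ => ∑' j : ℤ, z ^ j * coeff x n j) atTop
      (𝓝 (∑' j : ℤ, z ^ j * (x ^ (j ^ 2) * (L * (L⁻¹ * L⁻¹))))) := by
    refine tendsto_tsum_of_dominated_convergence
      (bound := fun j : ℤ => x ^ (j ^ 2) * (1 * (L⁻¹ * L⁻¹)))
      ((summable_sq h0 h1).mul_right _) (fun j => ?_) (Eventually.of_forall fun n j => ?_)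
    · have t1 : Tendsto (fun n : ℕ => (n : ℤ) - j) atTop atTop :=
        tendsto_atTop_add_const_right _ (-j) tendsto_natCast_atTop_atTop
      have t2 : Tendsto (fun n : ℕ => (n : ℤ) + j) atTop atTop :=
        tendsto_atTop_add_const_right _ j tendsto_natCast_atTop_atTop
      have t3 : Tendsto (fun n : ℕ => 2 * n) atTop atTop :=
        tendsto_id.const_mul_atTop' two_pos
      exact ((((tendsto_Q h0 h1).comp t3).mul (((tendsto_R h0 h1).comp t1).mul
        ((tendsto_R h0 h1).comp t2))).const_mul _).const_mul _
    · have hQ1 : Q x (2 * n) ≤ 1 := by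
        simpa [Q] using antitone_Q h0 h1 (Nat.zero_le (2 * n))
      have hR1 := R_nonneg h0 h1 (n - j)
      have hR2 := R_nonneg h0 h1 (n + j)
      have hQ0 := (Q_pos h0 h1 (2 * n)).le
      have hc : 0 ≤ coeff x n j := by unfold coeff; positivity
      rw [norm_mul, norm_zpow, Real.norm_eq_abs, Real.norm_eq_abs, habs, one_zpow, one_mul,
        abs_of_nonneg hc, coeff]
      have := R_le h0 h1 (n - j)
      have := R_le h0 h1 (n + j)
      gcongr
  have hfin : ∀ n : ℕ, ∑' j : ℤ, z ^ j * coeff x n j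
      = ∏ k ∈ Finset.range n, (1 + z * x ^ (2 * k + 1)) ^ 2 := fun n => by
    rw [(hasSum_finite_triple h0 h1 hz0 n).tsum_eq, hinv]
    simp only [sq]
  simp only [hfin] at hD
  have key := tendsto_nhds_unique hP hD
  rw [key]
  have e : ∀ j : ℤ, z ^ j * (x ^ (j ^ 2) * (L * (L⁻¹ * L⁻¹)))
      = (z ^ j * x ^ (j ^ 2)) * L⁻¹ := fun j => by field_simp
  simp only [e]
  rw [tsum_mul_right]
  convert hsum.hasSum using 1
  field_simp

end SquareGF

open SquareGF in
theorem square_numbers_generating_function (q : ℝ) (hq0 : 0 < q) (hq1 : q < 1) :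
    2 + 4 * ∑' m : ℕ, q ^ (((m : ℝ) + 1) ^ 2)
    = (∏' k : ℕ, (1 - q ^ (((k : ℝ) + 1) / 2))) *
      ((∏' k : ℕ, (1 - q ^ ((2 * (k : ℝ) + 1) / 4)) ^ 2)
        + ∏' k : ℕ, (1 + q ^ ((2 * (k : ℝ) + 1) / 4)) ^ 2) := by
  obtain ⟨x, hx⟩ : ∃ x, x = q ^ (1 / 4 : ℝ) := ⟨_, rfl⟩
  have h0 : 0 < x := hx ▸ Real.rpow_pos_of_pos hq0 _
  have h1 : x < 1 := hx ▸ Real.rpow_lt_one hq0.le hq1 (by norm_num)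
  have hpow : ∀ n : ℕ, x ^ n = q ^ ((n : ℝ) / 4) := fun n => by
    rw [hx, ← Real.rpow_natCast, ← Real.rpow_mul hq0.le]; congr 1; ring
  have e1 : ∀ k : ℕ, q ^ (((k : ℝ) + 1) / 2) = x ^ (2 * (k + 1)) := fun k => by
    rw [hpow]; congr 1; push_cast; ring
  have e2 : ∀ k : ℕ, q ^ ((2 * (k : ℝ) + 1) / 4) = x ^ (2 * k + 1) := fun k => by
    rw [hpow]; congr 1; push_cast; ring
  have e3 : ∀ m : ℕ, q ^ (((m : ℝ) + 1) ^ 2) = x ^ ((2 * (m + 1)) ^ 2) := fun m => by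
    rw [hpow]; congr 1; push_cast; ring
  simp only [e1, e2, e3]
  have hs := (triple_product h0 h1 (z := -1) (by norm_num)).add
    (triple_product h0 h1 (z := 1) (by norm_num))
  simp only [neg_mul, one_mul, ← sub_eq_add_neg, one_zpow] at hs
  rw [← mul_add] at hs
  -- Only even indices contribute.
  have hinj : Function.Injective fun m : ℤ => 2 * m := fun a b h => by simpa using h
  rw [← hinj.hasSum_iff] at hs
  · have hg : ((fun j : ℤ => (-1 : ℝ) ^ j * x ^ (j ^ 2) + x ^ (j ^ 2)) ∘ fun m : ℤ => 2 * m)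
        = fun m : ℤ => 2 * x ^ ((2 * m) ^ 2) := by
      funext m
      simp only [Function.comp, (even_two_mul m).neg_one_zpow]
      ring
    rw [hg] at hs
    have hp : Summable fun n : ℕ => 2 * x ^ ((2 * ((n : ℤ) + 1)) ^ 2) :=
      hs.summable.comp_injective (i := fun n : ℕ => (n : ℤ) + 1) (fun a b h => by simpa using h)
    have hm : ∀ n : ℕ, 2 * x ^ ((2 * (-((n : ℤ) + 1))) ^ 2)
        = 2 * x ^ ((2 * ((n : ℤ) + 1)) ^ 2) := fun n => by
      rw [mul_neg, neg_sq]
    have hc : ∀ n : ℕ, x ^ ((2 * ((n : ℤ) + 1)) ^ 2) = x ^ ((2 * (n + 1)) ^ 2) := fun n => by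
      rw [← zpow_natCast]; push_cast; rfl
    have hp' : Summable fun n : ℕ => 2 * x ^ ((2 * (-((n : ℤ) + 1))) ^ 2) := by
      simpa only [hm] using hp
    rw [← hs.tsum_eq, tsum_of_add_one_of_neg_add_one (f := fun m : ℤ => 2 * x ^ ((2 * m) ^ 2))
      hp hp']
    simp only [hm, hc, tsum_mul_left]
    norm_num
    ring
  · intro j hj
    have ho : Odd j := by
      rw [← Int.not_even_iff_odd]
      rintro ⟨m, rfl⟩
      exact hj ⟨m, by ring⟩
    simp [ho.neg_one_zpow]
end

section
/- Let q be a real number with 0 < q < 1. Then the generating function for the (generalized) hexagonal numbers m(2m−1) satisfies 2·Σ_{m∈ℤ} q^{m(2m−1)} = ∏_{k=0}^{∞} (1 − q^{2k+2})(1 + q^{k}). -/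
/-!
The exponents `m (2 m - 1)`, `m ∈ ℤ`, run once through the triangular numbers, so the claim is
Gauss's identity `∑ q ^ (n (n + 1) / 2) = ∏ (1 - q ^ (2 k + 2)) / (1 - q ^ (2 k + 1))` combined with
Euler's identity `∏ (1 + q ^ (k + 1)) * ∏ (1 - q ^ (2 k + 1)) = 1`; the factor `2` is the `k = 0`
factor of `∏ (1 + q ^ k)`.

Gauss's identity is obtained by Shanks' method. With `P n` the `n`-th partial product, the finite
identity `shanks_identity`
`∑_{j < n} (q ^ (j (2 j + 1)) + q ^ ((j + 1) (2 j + 1))) = ∑_{s < n} P n / P s * q ^ (s (2 n + 1))`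
holds by induction on `n`, the increment of the right-hand side being a telescoping sum. Since `P` is
increasing and bounded, the terms with `s ≥ 1` contribute `O(n q ^ n)`, and only `P n` survives
as `n → ∞`.
-/

open Filter Topology

namespace HexagonalAux

/-- The partial product `∏_{k < n} (1 - x ^ (2 k + 2)) / (1 - x ^ (2 k + 1))` in Gauss's identity. -/
noncomputable def gaussProd (x : ℝ) (n : ℕ) : ℝ :=
  ∏ k ∈ Finset.range n, (1 - x ^ (2 * k + 2)) / (1 - x ^ (2 * k + 1))

lemma one_sub_pow_pos {x : ℝ} (h0 : 0 < x) (h1 : x < 1) (n : ℕ) : 0 < 1 - x ^ (n + 1) :=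
  sub_pos.2 (pow_lt_one₀ h0.le h1 n.succ_ne_zero)

lemma gaussProd_succ (x : ℝ) (n : ℕ) :
    gaussProd x (n + 1) = gaussProd x n * ((1 - x ^ (2 * n + 2)) / (1 - x ^ (2 * n + 1))) :=
  Finset.prod_range_succ _ _

lemma gaussProd_pos {x : ℝ} (h0 : 0 < x) (h1 : x < 1) (n : ℕ) : 0 < gaussProd x n :=
  Finset.prod_pos fun k _ =>
    div_pos (one_sub_pow_pos h0 h1 (2 * k + 1)) (one_sub_pow_pos h0 h1 (2 * k))

lemma one_le_gaussProd {x : ℝ} (h0 : 0 < x) (h1 : x < 1) (n : ℕ) : 1 ≤ gaussProd x n := by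
  induction n with
  | zero => simp [gaussProd]
  | succ n ih =>
    rw [gaussProd_succ]
    refine one_le_mul_of_one_le_of_one_le ih ?_
    rw [one_le_div (one_sub_pow_pos h0 h1 (2 * n))]
    have : x ^ (2 * n + 2) ≤ x ^ (2 * n + 1) := pow_le_pow_of_le_one h0.le h1.le (by omega)
    linarith

/-- The increment in `n` of a summand of Shanks' sum is a difference in `s`, so that the increments
telescope. -/
lemma shanks_step {x : ℝ} (h0 : 0 < x) (h1 : x < 1) (n s : ℕ) :
    gaussProd x (n + 1) / gaussProd x s * x ^ (s * (2 * (n + 1) + 1))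
      - gaussProd x n / gaussProd x s * x ^ (s * (2 * n + 1))
    = gaussProd x n / gaussProd x (s + 1) * (1 - x ^ (2 * (s + 1)))
        * x ^ ((s + 1) * (2 * n + 1)) / (1 - x ^ (2 * n + 1))
      - gaussProd x n / gaussProd x s * (1 - x ^ (2 * s))
        * x ^ (s * (2 * n + 1)) / (1 - x ^ (2 * n + 1)) := by
  have hs := (gaussProd_pos h0 h1 s).ne'
  have a1 := (one_sub_pow_pos h0 h1 (2 * n)).ne'
  have a2 := (one_sub_pow_pos h0 h1 (2 * s)).ne'
  have a3 := (one_sub_pow_pos h0 h1 (2 * s + 1)).ne'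
  have e1 : x ^ (s * (2 * (n + 1) + 1)) = x ^ (s * (2 * n + 1)) * x ^ (2 * s) := by
    rw [← pow_add]; congr 1; ring
  have e2 : x ^ ((s + 1) * (2 * n + 1)) = x ^ (s * (2 * n + 1)) * x ^ (2 * n + 1) := by
    rw [← pow_add]; congr 1; ring
  have e3 : x ^ (2 * n + 2) = x ^ (2 * n + 1) * x := pow_succ _ _
  have e4 : x ^ (2 * s + 1) = x ^ (2 * s) * x := pow_succ _ _
  have e5 : 2 * (s + 1) = 2 * s + 1 + 1 := by ring
  have key : gaussProd x n / gaussProd x (s + 1) * (1 - x ^ (2 * (s + 1)))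
      = gaussProd x n / gaussProd x s * (1 - x ^ (2 * s + 1)) := by
    rw [gaussProd_succ, e5]
    field_simp
  rw [key, e1, e2, gaussProd_succ, e3, e4]
  field_simp
  ring

/-- Shanks' finite form of Gauss's identity; the left-hand side is the sum of `x ^ T` over the first
`2 n` triangular numbers `T`. -/
lemma shanks_identity {x : ℝ} (h0 : 0 < x) (h1 : x < 1) (n : ℕ) :
    ∑ j ∈ Finset.range n, (x ^ (j * (2 * j + 1)) + x ^ ((j + 1) * (2 * j + 1)))
    = ∑ s ∈ Finset.range n, gaussProd x n / gaussProd x s * x ^ (s * (2 * n + 1)) := by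
  induction n with
  | zero => simp
  | succ n ih =>
    have tel := Finset.sum_range_sub (fun s => gaussProd x n / gaussProd x s * (1 - x ^ (2 * s))
        * x ^ (s * (2 * n + 1)) / (1 - x ^ (2 * n + 1))) n
    rw [← Finset.sum_congr rfl fun s _ => shanks_step h0 h1 n s, Finset.sum_sub_distrib, ← ih] at tel
    rw [Finset.sum_range_succ, Finset.sum_range_succ _ n, sub_eq_iff_eq_add.1 tel, gaussProd_succ]
    have hn := (gaussProd_pos h0 h1 n).ne'
    have a1 := (one_sub_pow_pos h0 h1 (2 * n)).ne'
    have e1 : x ^ (n * (2 * (n + 1) + 1)) = x ^ (n * (2 * n + 1)) * x ^ (2 * n) := by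
      rw [← pow_add]; congr 1; ring
    have e2 : x ^ ((n + 1) * (2 * n + 1)) = x ^ (n * (2 * n + 1)) * x ^ (2 * n + 1) := by
      rw [← pow_add]; congr 1; ring
    have e3 : x ^ (2 * n + 2) = x ^ (2 * n) * x ^ 2 := pow_add _ _ _
    have e4 : x ^ (2 * n + 1) = x ^ (2 * n) * x := pow_succ _ _
    rw [e1, e2, e3]
    simp only [mul_zero, pow_zero, sub_self, zero_mul, zero_div, sub_zero]
    rw [e4] at a1 ⊢
    field_simp
    ring

/-- In Shanks' sum the `s = 0` term is `P n`, and each of the at most `n` other terms is at most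
`P n * x ^ n`. -/
lemma shanks_bound {x : ℝ} (h0 : 0 < x) (h1 : x < 1) (n : ℕ) (hn : 0 < n) :
    |∑ j ∈ Finset.range n, (x ^ (j * (2 * j + 1)) + x ^ ((j + 1) * (2 * j + 1))) - gaussProd x n|
      ≤ gaussProd x n * (n * x ^ n) := by
  rw [shanks_identity h0 h1]
  cases n with
  | zero => exact absurd hn (lt_irrefl 0)
  | succ n =>
    set P := gaussProd x (n + 1) with hP
    have hPpos : 0 < P := gaussProd_pos h0 h1 _
    have p0 : gaussProd x 0 = 1 := by simp [gaussProd]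
    rw [Finset.sum_range_succ', p0]
    simp only [div_one, zero_mul, pow_zero, mul_one, add_sub_cancel_right]
    rw [abs_of_nonneg (Finset.sum_nonneg fun s _ => by
      have := gaussProd_pos h0 h1 (s + 1); positivity)]
    calc _ ≤ ∑ s ∈ Finset.range n, P * x ^ (n + 1) := by
          refine Finset.sum_le_sum fun s _ => ?_
          refine mul_le_mul (div_le_self hPpos.le (one_le_gaussProd h0 h1 _))
            (pow_le_pow_of_le_one h0.le h1.le (by nlinarith)) (by positivity) hPpos.le
      _ = P * (n * x ^ (n + 1)) := by simp; ring
      _ ≤ _ := by gcongr; simp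

lemma summable_pow_of_le {x : ℝ} (h0 : 0 < x) (h1 : x < 1) (e : ℕ → ℕ) (he : ∀ n, n ≤ e n) :
    Summable fun n => x ^ e n :=
  (summable_geometric_of_lt_one h0.le h1).of_nonneg_of_le (fun _ => by positivity)
    fun n => pow_le_pow_of_le_one h0.le h1.le (he n)

lemma multipliable_one_sub {x : ℝ} (h0 : 0 < x) (h1 : x < 1) (e : ℕ → ℕ) (he : ∀ n, n ≤ e n) :
    Multipliable fun n => 1 - x ^ e n := by
  simpa only [sub_eq_add_neg] using
    Real.multipliable_one_add_of_summable (summable_pow_of_le h0 h1 e he).neg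

lemma multipliable_one_add {x : ℝ} (h0 : 0 < x) (h1 : x < 1) (e : ℕ → ℕ) (he : ∀ n, n ≤ e n) :
    Multipliable fun n => 1 + x ^ e n :=
  Real.multipliable_one_add_of_summable (summable_pow_of_le h0 h1 e he)

lemma tprod_even_ne_zero {x : ℝ} (h0 : 0 < x) (h1 : x < 1) :
    ∏' k : ℕ, (1 - x ^ (2 * k + 2)) ≠ 0 := by
  simp only [sub_eq_add_neg]
  refine tprod_one_add_ne_zero_of_summable (fun k => ?_) ?_
  · rw [← sub_eq_add_neg]
    exact (one_sub_pow_pos h0 h1 (2 * k + 1)).ne'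
  · exact (summable_pow_of_le h0 h1 (fun k => 2 * k + 2) (fun n => by omega)).neg.norm

/-- Euler's identity: partitions into distinct parts and into odd parts have the same generating
function. -/
lemma euler_identity {x : ℝ} (h0 : 0 < x) (h1 : x < 1) :
    (∏' k : ℕ, (1 + x ^ (k + 1))) * ∏' k : ℕ, (1 - x ^ (2 * k + 1)) = 1 := by
  have hA := multipliable_one_sub h0 h1 (fun k => 2 * k + 2) (fun n => by omega)
  have hO := multipliable_one_sub h0 h1 (fun k => 2 * k + 1) (fun n => by omega)
  have hE := multipliable_one_sub h0 h1 (fun k => k + 1) (fun n => by omega)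
  have hB := multipliable_one_add h0 h1 (fun k => k + 1) (fun n => by omega)
  have split : (∏' k : ℕ, (1 - x ^ (2 * k + 1))) * ∏' k : ℕ, (1 - x ^ (2 * k + 2))
      = ∏' k : ℕ, (1 - x ^ (k + 1)) :=
    tprod_even_mul_odd (f := fun k => 1 - x ^ (k + 1)) hO hA
  have square : (∏' k : ℕ, (1 + x ^ (k + 1))) * ∏' k : ℕ, (1 - x ^ (k + 1))
      = ∏' k : ℕ, (1 - x ^ (2 * k + 2)) := by
    rw [← hB.tprod_mul hE]
    exact tprod_congr fun k => by ring
  refine mul_right_cancel₀ (tprod_even_ne_zero h0 h1) ?_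
  rw [mul_assoc, split, square, one_mul]

lemma tendsto_gaussProd {x : ℝ} (h0 : 0 < x) (h1 : x < 1) :
    Tendsto (gaussProd x) atTop
      (𝓝 ((∏' k : ℕ, (1 - x ^ (2 * k + 2))) * ∏' k : ℕ, (1 + x ^ (k + 1)))) := by
  have hA := multipliable_one_sub h0 h1 (fun k => 2 * k + 2) (fun n => by omega)
  have hO := multipliable_one_sub h0 h1 (fun k => 2 * k + 1) (fun n => by omega)
  have he := euler_identity h0 h1
  have := hA.hasProd.tendsto_prod_nat.div hO.hasProd.tendsto_prod_nat (right_ne_zero_of_mul_eq_one he)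
  rw [eq_inv_of_mul_eq_one_left he, ← div_eq_mul_inv]
  refine this.congr fun n => ?_
  simp [gaussProd, Finset.prod_div_distrib]

/-- Gauss's identity for triangular numbers, listed in the order of the exponents `m (2 m - 1)` with
`m = -j` and `m = j + 1`. -/
lemma gauss_identity {x : ℝ} (h0 : 0 < x) (h1 : x < 1) :
    ∑' j : ℕ, (x ^ (j * (2 * j + 1)) + x ^ ((j + 1) * (2 * j + 1)))
      = (∏' k : ℕ, (1 - x ^ (2 * k + 2))) * ∏' k : ℕ, (1 + x ^ (k + 1)) := by
  have hs : Summable fun j : ℕ => x ^ (j * (2 * j + 1)) + x ^ ((j + 1) * (2 * j + 1)) :=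
    (summable_pow_of_le h0 h1 _ fun n => by nlinarith).add
      (summable_pow_of_le h0 h1 _ fun n => by nlinarith)
  have hP := tendsto_gaussProd h0 h1
  have herr := hP.mul (tendsto_self_mul_const_pow_of_lt_one h0.le h1)
  rw [mul_zero] at herr
  have hdiff := squeeze_zero_norm'
    ((eventually_gt_atTop 0).mono fun n hn => (Real.norm_eq_abs _).trans_le (shanks_bound h0 h1 n hn))
    herr
  have := hdiff.add hP
  simp only [sub_add_cancel, zero_add] at this
  exact tendsto_nhds_unique hs.hasSum.tendsto_sum_nat this

/-- The bilateral sum over hexagonal exponents, with `m ≤ 0` and `m ≥ 1` paired up. -/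
lemma tsum_hexagonal {x : ℝ} (h0 : 0 < x) (h1 : x < 1) :
    ∑' m : ℤ, x ^ ((m : ℝ) * (2 * (m : ℝ) - 1))
      = ∑' j : ℕ, (x ^ (j * (2 * j + 1)) + x ^ ((j + 1) * (2 * j + 1))) := by
  rw [← (Equiv.neg ℤ).tsum_eq]
  have s1 : Summable fun j : ℕ => x ^ (j * (2 * j + 1)) :=
    summable_pow_of_le h0 h1 _ fun n => by nlinarith
  have s2 : Summable fun j : ℕ => x ^ ((j + 1) * (2 * j + 1)) :=
    summable_pow_of_le h0 h1 _ fun n => by nlinarith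
  rw [s1.tsum_add s2]
  refine (HasSum.of_nat_of_neg_add_one ?_ ?_).tsum_eq
  · convert s1.hasSum using 2 with j
    rw [← Real.rpow_natCast]
    congr 1
    simp only [Equiv.neg_apply]
    push_cast
    ring
  · convert s2.hasSum using 2 with j
    rw [← Real.rpow_natCast]
    congr 1
    simp only [Equiv.neg_apply]
    push_cast
    ring

end HexagonalAux

open HexagonalAux in
theorem hexagonal_numbers_generating_function (q : ℝ) (hq0 : 0 < q) (hq1 : q < 1) :
    2 * ∑' m : ℤ, q ^ ((m : ℝ) * (2 * (m : ℝ) - 1))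
    = ∏' k : ℕ, ((1 - q ^ (2 * (k : ℝ) + 2)) * (1 + q ^ (k : ℝ))) := by
  have hA : Multipliable fun k : ℕ => (1 - q ^ (2 * k + 2)) :=
    multipliable_one_sub hq0 hq1 (fun k => 2 * k + 2) (fun n => by omega)
  have hB : Multipliable fun k : ℕ => (1 + q ^ (k + 1)) :=
    multipliable_one_add hq0 hq1 (fun k => k + 1) (fun n => by omega)
  have hB' : Multipliable fun k : ℕ => (1 + q ^ k) :=
    multipliable_one_add hq0 hq1 (fun k => k) (fun n => le_rfl)
  have hprod : ∏' k : ℕ, ((1 - q ^ (2 * (k : ℝ) + 2)) * (1 + q ^ (k : ℝ)))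
      = ∏' k : ℕ, ((1 - q ^ (2 * k + 2)) * (1 + q ^ k)) := by
    refine tprod_congr fun k => ?_
    have e : 2 * (k : ℝ) + 2 = ((2 * k + 2 : ℕ) : ℝ) := by push_cast; ring
    rw [e, Real.rpow_natCast, Real.rpow_natCast]
  rw [hprod, hA.tprod_mul hB', tprod_eq_zero_mul' (f := fun k : ℕ => 1 + q ^ k) hB, tsum_hexagonal hq0 hq1,
    gauss_identity hq0 hq1]
  ring
end
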